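/- arXiv:0709.1578 — 2 statements merged into one kernel-verified Lean document; each statement's English description precedes it below -/
import Mathlib

section
/- Converse direction of the main theorem: with h, f as above, 𝒟δ_h = ℛ_h, if ℒ_{h,f} = ℛ_{h,f} then −1 is not a root of b'_f(h,s) and b'_f(h,s) has no strictly negative integral root. In particular, under the assumption 1 ∈ 𝒟𝒥_{h,f} + Ann_𝒟 δ_{h,f} and that −1 is the smallest integral root of b_f(δ_h,s), the polynomial identity argument shows (s+1) cannot divide b'_f(h,s). -/
open Polynomial

noncomputable section

set_option maxHeartbeats 1000000
set_option synthInstance.maxHeartbeats 400000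

/-- The ring `𝒪` of germs (polynomial model `ℂ[x₁,…,xₙ]`). -/
abbrev OO (n : ℕ) := MvPolynomial (Fin n) ℂ
/-- The fraction field of `𝒪`. -/
abbrev KK (n : ℕ) := FractionRing (OO n)

variable {n : ℕ}

/-- Inclusion `𝒪 → K`. -/
def toK {n : ℕ} (r : OO n) : KK n := algebraMap _ _ r

/-- A family of derivations of `K` extending the partial derivatives `∂/∂xᵢ` of `𝒪`. -/
def ExtendsPderiv (d : Fin n → Derivation ℂ (KK n) (KK n)) : Prop :=
  ∀ (i : Fin n) (r : OO n), d i (toK r) = toK (MvPolynomial.pderiv i r)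

/-- Coefficientwise action of a derivation of `K` on `K[s]`. -/
def coeffDer (d : Derivation ℂ (KK n) (KK n)) :
    Derivation ℂ (Polynomial (KK n)) (Polynomial (KK n)) :=
  PolynomialModule.equivPolynomialSelf.compDer d.mapCoeffs

/-- Multiplication operator on `K[s]`. -/
def mulOp (a : Polynomial (KK n)) : Module.End ℂ (Polynomial (KK n)) :=
  LinearMap.mulLeft ℂ a

/-- Twisted partial-derivative operator on `K[s]·f^s`:
`∂ᵢ(g(s) f^s) = ((∂ᵢ g)(s) + s·g(s)·(∂ᵢf/f))·f^s`. -/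
def Dop (d : Derivation ℂ (KK n) (KK n)) (f : OO n) : Module.End ℂ (Polynomial (KK n)) :=
  (coeffDer d).toLinearMap + mulOp (Polynomial.X * Polynomial.C (d (toK f) / toK f))

/-- The image of `𝒟[s]` in `End(K[s]·f^s)`: the ℂ-algebra generated by multiplications by
elements of `𝒪`, multiplication by `s`, and the twisted partials `∂ᵢ`. -/
def WeylS (d : Fin n → Derivation ℂ (KK n) (KK n)) (f : OO n) :
    Subalgebra ℂ (Module.End ℂ (Polynomial (KK n))) :=
  Algebra.adjoin ℂ
    ((Set.range fun r : OO n => mulOp (Polynomial.C (toK r))) ∪ {mulOp Polynomial.X} ∪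
      Set.range fun i => Dop (d i) f)

/-- The `𝒟[s]`-orbit span `𝒟[s]·T` of a set `T ⊆ K[s]·f^s`. -/
def DSpan (d : Fin n → Derivation ℂ (KK n) (KK n)) (f : OO n)
    (T : Set (Polynomial (KK n))) : Submodule ℂ (Polynomial (KK n)) :=
  Submodule.span ℂ {y | ∃ P ∈ WeylS d f, ∃ t ∈ T, y = P t}

/-- The image of `𝒟` in `End(K)` (untwisted action). -/
def Weyl0 (d : Fin n → Derivation ℂ (KK n) (KK n)) : Subalgebra ℂ (Module.End ℂ (KK n)) :=
  Algebra.adjoin ℂ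
    ((Set.range fun r : OO n => LinearMap.mulLeft ℂ (toK r)) ∪
      Set.range fun i => (d i).toLinearMap)

/-- The `𝒟`-orbit span `𝒟·T` of a set `T ⊆ K`. -/
def DSpan0 (d : Fin n → Derivation ℂ (KK n) (KK n)) (T : Set (KK n)) : Submodule ℂ (KK n) :=
  Submodule.span ℂ {y | ∃ P ∈ Weyl0 d, ∃ t ∈ T, y = P t}

/-- The ℂ-submodule `Σ_{g ∈ G} 𝒪[1/g]` of `K`. -/
def locSub (G : Set (OO n)) : Submodule ℂ (KK n) :=
  Submodule.span ℂ {x | ∃ r : OO n, ∃ g ∈ G, ∃ k : ℕ, x = toK r * (toK g)⁻¹ ^ k}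

/-- Polynomials in `s` all of whose coefficients lie in `V`. -/
def polySub (V : Submodule ℂ (KK n)) : Submodule ℂ (Polynomial (KK n)) where
  carrier := {g | ∀ m, g.coeff m ∈ V}
  add_mem' := fun ha hb m => by simpa using V.add_mem (ha m) (hb m)
  zero_mem' := fun m => by rw [Polynomial.coeff_zero]; exact V.zero_mem
  smul_mem' := fun c g hg m => by
    simpa [Polynomial.coeff_smul] using V.smul_mem c (hg m)

/-- Maximal `(p+1)×(p+1)` minor of the Jacobian matrix of `(h₁,…,h_p,f)`
on the columns `cols`. -/
def minorHF {p : ℕ} (h : Fin p → OO n) (f : OO n) (cols : Fin (p + 1) → Fin n) : OO n :=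
  Matrix.det (Matrix.of fun i j =>
    Fin.lastCases (MvPolynomial.pderiv (cols j) f)
      (fun i' => MvPolynomial.pderiv (cols j) (h i')) i)

/-- `p×p` minor of the Jacobian matrix of `h = (h₁,…,h_p)` on the columns `cols`. -/
def minorH {p : ℕ} (h : Fin p → OO n) (cols : Fin p → Fin n) : OO n :=
  Matrix.det (Matrix.of fun i j => MvPolynomial.pderiv (cols j) (h i))

/-- Image of `b(s) ∈ ℂ[s]` in `K[s]`. -/
def bK {n : ℕ} (b : Polynomial ℂ) : Polynomial (KK n) :=
  b.map ((algebraMap (OO n) (KK n)).comp MvPolynomial.C)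

namespace Aux

lemma coeff_coeffDer (d : Derivation ℂ (KK n) (KK n)) (g : Polynomial (KK n)) (m : ℕ) :
    (coeffDer d g).coeff m = d (g.coeff m) := by
  rfl

lemma coeffDer_C (d : Derivation ℂ (KK n) (KK n)) (x : KK n) :
    coeffDer d (Polynomial.C x) = Polynomial.C (d x) := by
  ext m
  rw [coeff_coeffDer, Polynomial.coeff_C, Polynomial.coeff_C]
  split_ifs <;> simp

lemma coeffDer_X (d : Derivation ℂ (KK n) (KK n)) :
    coeffDer d (Polynomial.X) = 0 := by
  ext m
  rw [coeff_coeffDer, Polynomial.coeff_X]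
  split_ifs <;> simp

lemma Dop_apply (d : Derivation ℂ (KK n) (KK n)) (f : OO n) (g : Polynomial (KK n)) :
    Dop d f g = coeffDer d g + Polynomial.X * Polynomial.C (d (toK f) / toK f) * g := rfl

lemma mulOp_apply (a g : Polynomial (KK n)) : mulOp a g = a * g := rfl

/-- stable under `𝒟`. -/
structure Stable0 (d : Fin n → Derivation ℂ (KK n) (KK n)) (W : Submodule ℂ (KK n)) : Prop where
  mul : ∀ (r : OO n) x, x ∈ W → toK r * x ∈ W
  der : ∀ i x, x ∈ W → d i x ∈ W

/-- stable under `𝒟[s]`. -/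
structure Stable (d : Fin n → Derivation ℂ (KK n) (KK n)) (f : OO n)
    (N : Submodule ℂ (Polynomial (KK n))) : Prop where
  mul : ∀ (r : OO n) x, x ∈ N → Polynomial.C (toK r) * x ∈ N
  mulX : ∀ x, x ∈ N → Polynomial.X * x ∈ N
  der : ∀ i x, x ∈ N → Dop (d i) f x ∈ N

variable {d : Fin n → Derivation ℂ (KK n) (KK n)} {f : OO n}

lemma DSpan0_le {T : Set (KK n)} {W : Submodule ℂ (KK n)} (hW : Stable0 d W)
    (hT : T ⊆ W) : DSpan0 d T ≤ W := by
  refine Submodule.span_le.2 ?_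
  rintro y ⟨P, hP, t, ht, rfl⟩
  have : ∀ x ∈ W, P x ∈ W := by
    induction hP using Algebra.adjoin_induction with
    | mem P hP =>
      intro x hx
      rcases hP with ⟨r, rfl⟩ | ⟨i, rfl⟩
      · exact hW.mul r x hx
      · exact hW.der i x hx
    | algebraMap c => intro x hx; exact W.smul_mem c hx
    | add P Q _ _ h1 h2 => intro x hx; exact W.add_mem (h1 x hx) (h2 x hx)
    | mul P Q _ _ h1 h2 => intro x hx; exact h1 _ (h2 x hx)
  exact this t (hT ht)

lemma DSpan_le {T : Set (Polynomial (KK n))} {W : Submodule ℂ (Polynomial (KK n))}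
    (hW : Stable d f W) (hT : T ⊆ W) : DSpan d f T ≤ W := by
  refine Submodule.span_le.2 ?_
  rintro y ⟨P, hP, t, ht, rfl⟩
  have : ∀ x ∈ W, P x ∈ W := by
    induction hP using Algebra.adjoin_induction with
    | mem P hP =>
      intro x hx
      rcases hP with (⟨r, rfl⟩ | rfl) | ⟨i, rfl⟩
      · exact hW.mul r x hx
      · exact hW.mulX x hx
      · exact hW.der i x hx
    | algebraMap c => intro x hx; exact W.smul_mem c hx
    | add P Q _ _ h1 h2 => intro x hx; exact W.add_mem (h1 x hx) (h2 x hx)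
    | mul P Q _ _ h1 h2 => intro x hx; exact h1 _ (h2 x hx)
  exact this t (hT ht)

lemma DSpan_op {T : Set (Polynomial (KK n))} {Q : Module.End ℂ (Polynomial (KK n))}
    (hQ : Q ∈ WeylS d f) : ∀ x ∈ DSpan d f T, Q x ∈ DSpan d f T := by
  intro x hx
  induction hx using Submodule.span_induction with
  | mem x hx =>
    obtain ⟨P, hP, t, ht, rfl⟩ := hx
    exact Submodule.subset_span ⟨Q * P, mul_mem hQ hP, t, ht, rfl⟩
  | zero => rw [map_zero]; exact zero_mem _
  | add x y _ _ h1 h2 => rw [map_add]; exact add_mem h1 h2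
  | smul c x _ h1 => rw [map_smul]; exact Submodule.smul_mem _ c h1

lemma DSpan_stable (T : Set (Polynomial (KK n))) : Stable d f (DSpan d f T) where
  mul r := DSpan_op (Algebra.subset_adjoin (Or.inl (Or.inl ⟨r, rfl⟩)))
  mulX := DSpan_op (Algebra.subset_adjoin (Or.inl (Or.inr rfl)))
  der i := DSpan_op (Algebra.subset_adjoin (Or.inr ⟨i, rfl⟩))

lemma subset_DSpan (T : Set (Polynomial (KK n))) : T ⊆ DSpan d f T := by
  intro t ht
  exact Submodule.subset_span ⟨1, one_mem _, t, ht, rfl⟩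

lemma Stable.sup {N N' : Submodule ℂ (Polynomial (KK n))} (h : Stable d f N)
    (h' : Stable d f N') : Stable d f (N ⊔ N') where
  mul r x hx := by
    obtain ⟨y, hy, z, hz, rfl⟩ := Submodule.mem_sup.1 hx
    rw [mul_add]
    exact add_mem (Submodule.mem_sup_left (h.mul r y hy)) (Submodule.mem_sup_right (h'.mul r z hz))
  mulX x hx := by
    obtain ⟨y, hy, z, hz, rfl⟩ := Submodule.mem_sup.1 hx
    rw [mul_add]
    exact add_mem (Submodule.mem_sup_left (h.mulX y hy)) (Submodule.mem_sup_right (h'.mulX z hz))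
  der i x hx := by
    obtain ⟨y, hy, z, hz, rfl⟩ := Submodule.mem_sup.1 hx
    rw [map_add]
    exact add_mem (Submodule.mem_sup_left (h.der i y hy)) (Submodule.mem_sup_right (h'.der i z hz))

lemma toK_mul (a b : OO n) : toK (a * b) = toK a * toK b := map_mul _ _ _
lemma toK_pow (a : OO n) (k : ℕ) : toK (a ^ k) = toK a ^ k := map_pow _ _ _
lemma toK_add (a b : OO n) : toK (a + b) = toK a + toK b := map_add _ _ _
lemma toK_ne {a : OO n} (h : a ≠ 0) : toK a ≠ 0 :=
  (map_ne_zero_iff _ (IsFractionRing.injective (OO n) (KK n))).2 h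

lemma locSub_stable (hd : ExtendsPderiv d) (G : Set (OO n)) : Stable0 d (locSub G) where
  mul r x hx := by
    induction hx using Submodule.span_induction with
    | mem x hx =>
      obtain ⟨r', g, hg, k, rfl⟩ := hx
      exact Submodule.subset_span ⟨r * r', g, hg, k, by rw [toK_mul, mul_assoc]⟩
    | zero => rw [mul_zero]; exact zero_mem _
    | add x y _ _ h1 h2 => rw [mul_add]; exact add_mem h1 h2
    | smul c x _ h1 => rw [mul_smul_comm]; exact Submodule.smul_mem _ c h1
  der i x hx := by
    induction hx using Submodule.span_induction with
    | mem x hx =>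
      obtain ⟨r, g, hg, k, rfl⟩ := hx
      have e : d i (toK r * (toK g)⁻¹ ^ k) =
          toK (MvPolynomial.pderiv i r) * (toK g)⁻¹ ^ k +
          (-(k : ℂ)) • (toK (r * MvPolynomial.pderiv i g) * (toK g)⁻¹ ^ (k + 1)) := by
        rw [Derivation.leibniz, Derivation.leibniz_pow, Derivation.leibniz_inv, hd, hd, toK_mul]
        simp only [smul_eq_mul, nsmul_eq_mul, Algebra.smul_def, map_neg, map_natCast]
        rcases k with _ | k
        · simp
        · simp only [Nat.add_sub_cancel]; push_cast; ring
      rw [e]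
      exact add_mem (Submodule.subset_span ⟨_, g, hg, _, rfl⟩)
        (Submodule.smul_mem _ _ (Submodule.subset_span ⟨_, g, hg, _, rfl⟩))
    | zero => rw [map_zero]; exact zero_mem _
    | add x y _ _ h1 h2 => rw [map_add]; exact add_mem h1 h2
    | smul c x _ h1 => rw [Derivation.map_smul]; exact Submodule.smul_mem _ c h1

lemma polySub_stable (hd : ExtendsPderiv d) {W : Submodule ℂ (KK n)} (hW : Stable0 d W)
    (hf : ∀ x ∈ W, (toK f)⁻¹ * x ∈ W) : Stable d f (polySub W) where
  mul r x hx m := by rw [Polynomial.coeff_C_mul]; exact hW.mul r _ (hx m)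
  mulX x hx m := by
    rcases m with _ | m
    · rw [Polynomial.mul_coeff_zero, Polynomial.coeff_X_zero, zero_mul]; exact zero_mem _
    · rw [Polynomial.coeff_X_mul]; exact hx m
  der i x hx m := by
    rw [Dop_apply, Polynomial.coeff_add, coeff_coeffDer, mul_assoc]
    refine add_mem (hW.der i _ (hx m)) ?_
    rcases m with _ | m
    · rw [Polynomial.mul_coeff_zero, Polynomial.coeff_X_zero, zero_mul]; exact zero_mem _
    · rw [Polynomial.coeff_X_mul, Polynomial.coeff_C_mul, hd, div_eq_mul_inv, mul_assoc]
      exact hW.mul _ _ (hf _ (hx m))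

/-- product of complex polynomial -/
lemma Stable.bK_mul {N : Submodule ℂ (Polynomial (KK n))} (h : Stable d f N) (b : Polynomial ℂ)
    {x : Polynomial (KK n)} (hx : x ∈ N) : bK b * x ∈ N := by
  induction b using Polynomial.induction_on' with
  | add p q hp hq => simp only [bK, Polynomial.map_add, add_mul] at *; exact add_mem hp hq
  | monomial m a =>
    have e : bK (n := n) (Polynomial.monomial m a) * x = a • (Polynomial.X ^ m * x) := by
      rw [bK, Polynomial.map_monomial, ← Polynomial.C_mul_X_pow_eq_monomial, mul_assoc,
        ← Polynomial.smul_eq_C_mul]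
      rw [RingHom.comp_apply, ← MvPolynomial.algebraMap_eq, ← IsScalarTower.algebraMap_apply,
        algebraMap_smul]
    rw [e]
    refine Submodule.smul_mem _ _ ?_
    clear e
    induction m with
    | zero => simpa using hx
    | succ m ih => rw [pow_succ', mul_assoc]; exact h.mulX _ ih

lemma coeffDer_bK (d : Derivation ℂ (KK n) (KK n)) (b : Polynomial ℂ) :
    coeffDer d (bK b) = 0 := by
  ext m
  rw [coeff_coeffDer, bK, Polynomial.coeff_map, RingHom.comp_apply, ← MvPolynomial.algebraMap_eq,
    ← IsScalarTower.algebraMap_apply, Derivation.map_algebraMap, Polynomial.coeff_zero]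

lemma Dop_bK_mul (d : Derivation ℂ (KK n) (KK n)) (b : Polynomial ℂ) (x : Polynomial (KK n)) :
    Dop d f (bK b * x) = bK b * Dop d f x := by
  rw [Dop_apply, Dop_apply, Derivation.leibniz, coeffDer_bK, smul_zero, add_zero, smul_eq_mul]
  ring

/-- comap under multiplication by `b(s)` -/
lemma Stable.comap_bK {N : Submodule ℂ (Polynomial (KK n))} (h : Stable d f N) (b : Polynomial ℂ) :
    Stable d f (N.comap (mulOp (bK b))) where
  mul r x hx := by
    simp only [Submodule.mem_comap, mulOp_apply] at *
    rw [mul_left_comm]; exact h.mul r _ hx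
  mulX x hx := by
    simp only [Submodule.mem_comap, mulOp_apply] at *
    rw [mul_left_comm]; exact h.mulX _ hx
  der i x hx := by
    simp only [Submodule.mem_comap, mulOp_apply] at *
    rw [← Dop_bK_mul]; exact h.der i _ hx

/-- the shift `g(s) f^s ↦ g(s-j) f^(s-j)`. -/
def tau (f : OO n) (j : ℕ) : Module.End ℂ (Polynomial (KK n)) :=
  mulOp (Polynomial.C ((toK f)⁻¹ ^ j)) ∘ₗ
    ((Polynomial.taylor (-(j : KK n))).restrictScalars ℂ)

lemma tau_apply (j : ℕ) (g : Polynomial (KK n)) :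
    tau f j g = Polynomial.C ((toK f)⁻¹ ^ j) * g.comp (Polynomial.X - (j : Polynomial (KK n))) := by
  simp [tau, mulOp_apply, Polynomial.taylor_apply, sub_eq_add_neg]

lemma coeffDer_comp (d : Derivation ℂ (KK n) (KK n)) (j : ℕ) (g : Polynomial (KK n)) :
    coeffDer d (g.comp (Polynomial.X - (j : Polynomial (KK n)))) =
      (coeffDer d g).comp (Polynomial.X - (j : Polynomial (KK n))) := by
  induction g using Polynomial.induction_on' with
  | add p q hp hq => simp only [Polynomial.add_comp, map_add, hp, hq]
  | monomial m a =>
    rw [← Polynomial.C_mul_X_pow_eq_monomial]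
    simp [Derivation.leibniz, Derivation.leibniz_pow, coeffDer_C, coeffDer_X]
    try ring

lemma tau_Dop (d : Derivation ℂ (KK n) (KK n)) (j : ℕ) (g : Polynomial (KK n)) :
    tau f j (Dop d f g) = Dop d f (tau f j g) := by
  rw [tau_apply, tau_apply, Dop_apply, Dop_apply, Derivation.leibniz, coeffDer_comp, coeffDer_C,
    Derivation.leibniz_pow, Derivation.leibniz_inv]
  simp only [Polynomial.add_comp, Polynomial.mul_comp, Polynomial.X_comp, Polynomial.C_comp,
    smul_eq_mul, nsmul_eq_mul, div_eq_mul_inv, map_mul, map_pow, Polynomial.C_neg, map_natCast]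
  rcases j with _ | j
  · simp
  · simp only [Nat.add_sub_cancel]; push_cast; ring

lemma Stable.comap_tau {N : Submodule ℂ (Polynomial (KK n))} (h : Stable d f N)
    (j : ℕ) : Stable d f (N.comap (tau f j)) where
  mul r x hx := by
    simp only [Submodule.mem_comap] at *
    have : tau f j (Polynomial.C (toK r) * x) = Polynomial.C (toK r) * tau f j x := by
      simp only [tau_apply, Polynomial.mul_comp, Polynomial.C_comp]; ring
    rw [this]; exact h.mul r _ hx
  mulX x hx := by
    simp only [Submodule.mem_comap] at *
    have : tau f j (Polynomial.X * x) = Polynomial.X * tau f j x - (j : ℂ) • tau f j x := by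
      simp only [tau_apply, Polynomial.mul_comp, Polynomial.X_comp, Algebra.smul_def, map_natCast]
      ring
    rw [this]; exact sub_mem (h.mulX _ hx) (Submodule.smul_mem _ _ hx)
  der i x hx := by
    simp only [Submodule.mem_comap] at *
    rw [tau_Dop]; exact h.der i _ hx

lemma finv_pow {W : Submodule ℂ (KK n)} (hf : ∀ x ∈ W, (toK f)⁻¹ * x ∈ W) (j : ℕ) :
    ∀ x ∈ W, (toK f)⁻¹ ^ j * x ∈ W := by
  intro x hx
  induction j with
  | zero => simpa using hx
  | succ j ih => rw [pow_succ', mul_assoc]; exact hf _ ih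

lemma polySub_C {W : Submodule ℂ (KK n)} {x : KK n} (hx : x ∈ W) :
    Polynomial.C x ∈ polySub W := by
  intro m
  rw [Polynomial.coeff_C]
  split_ifs
  · exact hx
  · exact zero_mem _

/-- induction principle for `polySub`. -/
lemma polySub_le {W : Submodule ℂ (KK n)} {N : Submodule ℂ (Polynomial (KK n))}
    (hX : ∀ x ∈ N, Polynomial.X * x ∈ N) (hC : ∀ x ∈ W, Polynomial.C x ∈ N) :
    polySub W ≤ N := by
  intro g hg
  rw [g.as_sum_range_C_mul_X_pow]
  refine Submodule.sum_mem _ fun m hm => ?_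
  clear hm
  have := hC _ (hg m)
  generalize Polynomial.C (g.coeff m) = y at *
  clear hg
  induction m with
  | zero => simpa using this
  | succ m ih => rw [pow_succ', mul_left_comm]; exact hX _ ih

lemma polySub_tau (hd : ExtendsPderiv d) {W : Submodule ℂ (KK n)} (hW : Stable0 d W)
    (hf : ∀ x ∈ W, (toK f)⁻¹ * x ∈ W) (j : ℕ) :
    polySub W ≤ (polySub W).comap (tau f j) := by
  refine polySub_le ((polySub_stable hd hW hf).comap_tau j).mulX ?_
  intro x hx
  rw [Submodule.mem_comap, tau_apply, Polynomial.C_comp, ← Polynomial.C_mul]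
  exact polySub_C (finv_pow hf j x hx)

/-- constants -/
def cst : KK n →ₗ[ℂ] Polynomial (KK n) :=
  (Polynomial.CAlgHom (R := ℂ) (A := KK n)).toLinearMap

lemma cst_apply (x : KK n) : cst x = Polynomial.C x := rfl

lemma bK_C_mul (c : ℂ) (x : Polynomial (KK n)) : bK (Polynomial.C c) * x = c • x := by
  rw [bK, Polynomial.map_C, ← Polynomial.smul_eq_C_mul, RingHom.comp_apply,
    ← MvPolynomial.algebraMap_eq, ← IsScalarTower.algebraMap_apply, algebraMap_smul]

lemma bK_mul (a b : Polynomial ℂ) : bK (n := n) (a * b) = bK a * bK b := Polynomial.map_mul _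
lemma bK_add (a b : Polynomial ℂ) : bK (n := n) (a + b) = bK a + bK b := Polynomial.map_add _
lemma bK_X : bK (n := n) Polynomial.X = Polynomial.X := Polynomial.map_X _
lemma bK_one : bK (n := n) 1 = 1 := Polynomial.map_one _

/-- division by `s - c` in `W[s]`. -/
lemma exists_div {W : Submodule ℂ (KK n)} (c : ℂ) (g : Polynomial (KK n))
    (hg : g ∈ polySub W) :
    ∃ q ∈ polySub W, ∃ e : KK n, g = bK (Polynomial.X - Polynomial.C c) * q + Polynomial.C e := by
  have hle : polySub W ≤ (polySub W).map (mulOp (bK (Polynomial.X - Polynomial.C c))) ⊔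
      W.map cst := by
    refine polySub_le ?_ ?_
    · intro x hx
      obtain ⟨y, ⟨q, hq, rfl⟩, z, ⟨e, he, rfl⟩, rfl⟩ := Submodule.mem_sup.1 hx
      have e1 : Polynomial.X * (mulOp (bK (Polynomial.X - Polynomial.C c)) q + cst e) =
          mulOp (bK (Polynomial.X - Polynomial.C c)) (Polynomial.X * q + Polynomial.C e)
            + cst (c • e) := by
        have e2 : (Polynomial.X : Polynomial (KK n)) =
            bK (Polynomial.X - Polynomial.C c) + bK (Polynomial.C c) := by
          rw [← bK_add, sub_add_cancel, bK_X]
        have e3 := bK_C_mul c (Polynomial.C e)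
        rw [map_smul, cst_apply, ← e3, mulOp_apply, mulOp_apply]
        linear_combination Polynomial.C e * e2
      rw [e1]
      refine add_mem (Submodule.mem_sup_left ⟨_, ?_, rfl⟩)
        (Submodule.mem_sup_right ⟨_, W.smul_mem c he, rfl⟩)
      refine add_mem ?_ (polySub_C he)
      intro m
      rcases m with _ | m
      · rw [Polynomial.mul_coeff_zero, Polynomial.coeff_X_zero, zero_mul]; exact zero_mem _
      · rw [Polynomial.coeff_X_mul]; exact hq m
    · intro x hx
      exact Submodule.mem_sup_right ⟨x, hx, rfl⟩
  obtain ⟨y, ⟨q, hq, rfl⟩, z, ⟨e, he, rfl⟩, rfl⟩ := Submodule.mem_sup.1 (hle hg)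
  exact ⟨q, hq, e, rfl⟩

/-- evaluation `g(s) f^s ↦ g(-k) f^{-k}`. -/
def evk (f : OO n) (k : ℕ) : Polynomial (KK n) →ₗ[ℂ] KK n :=
  LinearMap.mulLeft ℂ ((toK f)⁻¹ ^ k) ∘ₗ
    ((Polynomial.leval (-(k : KK n))).restrictScalars ℂ)

lemma evk_apply (k : ℕ) (g : Polynomial (KK n)) :
    evk f k g = (toK f)⁻¹ ^ k * g.eval (-(k : KK n)) := rfl

lemma eval_coeffDer (d : Derivation ℂ (KK n) (KK n)) (k : ℕ) (g : Polynomial (KK n)) :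
    (coeffDer d g).eval (-(k : KK n)) = d (g.eval (-(k : KK n))) := by
  induction g using Polynomial.induction_on' with
  | add p q hp hq => simp only [Polynomial.eval_add, map_add, hp, hq]
  | monomial m a =>
    rw [← Polynomial.C_mul_X_pow_eq_monomial]
    simp [Derivation.leibniz, Derivation.leibniz_pow, coeffDer_C, coeffDer_X]
    try ring

lemma evk_Dop (d : Derivation ℂ (KK n) (KK n)) (k : ℕ) (g : Polynomial (KK n)) :
    evk f k (Dop d f g) = d (evk f k g) := by
  rw [evk_apply, evk_apply, Dop_apply, Polynomial.eval_add, eval_coeffDer, Derivation.leibniz,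
    Derivation.leibniz_pow, Derivation.leibniz_inv]
  simp only [Polynomial.eval_mul, Polynomial.eval_X, Polynomial.eval_C,
    smul_eq_mul, nsmul_eq_mul, div_eq_mul_inv]
  rcases k with _ | k
  · simp
  · simp only [Nat.add_sub_cancel]; push_cast; ring

lemma Stable.map_evk {N : Submodule ℂ (Polynomial (KK n))} (h : Stable d f N) (k : ℕ) :
    Stable0 d (N.map (evk f k)) where
  mul r x hx := by
    obtain ⟨u, hu, rfl⟩ := hx
    refine ⟨Polynomial.C (toK r) * u, h.mul r u hu, ?_⟩
    rw [evk_apply, evk_apply, Polynomial.eval_mul, Polynomial.eval_C]; ring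
  der i x hx := by
    obtain ⟨u, hu, rfl⟩ := hx
    exact ⟨_, h.der i u hu, evk_Dop _ _ _⟩

lemma locSub_le {G : Set (OO n)} {W : Submodule ℂ (KK n)}
    (h : ∀ (r : OO n), ∀ g ∈ G, ∀ k : ℕ, toK r * (toK g)⁻¹ ^ k ∈ W) : locSub G ≤ W := by
  refine Submodule.span_le.2 ?_
  rintro x ⟨r, g, hg, k, rfl⟩
  exact h r g hg k

lemma mem_locSub {G : Set (OO n)} (r : OO n) {g : OO n} (hg : g ∈ G) (k : ℕ) :
    toK r * (toK g)⁻¹ ^ k ∈ locSub G := Submodule.subset_span ⟨r, g, hg, k, rfl⟩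

/-- inverse of a factor of the denominators -/
lemma locSub_finv {G : Set (OO n)} (hf : toK f ≠ 0) (hG : ∀ g ∈ G, ∃ g', g = f * g' ∧ g' ≠ 0) :
    ∀ x ∈ locSub G, (toK f)⁻¹ * x ∈ locSub G := by
  intro x hx
  induction hx using Submodule.span_induction with
  | mem x hx =>
    obtain ⟨r, g, hg, k, rfl⟩ := hx
    obtain ⟨g', rfl, hg'⟩ := hG g hg
    have hg' := toK_ne hg'
    have : (toK f)⁻¹ * (toK r * (toK (f * g'))⁻¹ ^ k) =
        toK (r * g') * (toK (f * g'))⁻¹ ^ (k + 1) := by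
      simp only [toK_mul, mul_inv, mul_pow, pow_succ]; field_simp
    rw [this]
    exact mem_locSub _ hg _
  | zero => rw [mul_zero]; exact zero_mem _
  | add x y _ _ h1 h2 => rw [mul_add]; exact add_mem h1 h2
  | smul c x _ h1 => rw [mul_smul_comm]; exact Submodule.smul_mem _ c h1

end Aux

namespace Aux

variable {d : Fin n → Derivation ℂ (KK n) (KK n)} {f : OO n}

lemma minor_cofactor {p : ℕ} (h : Fin p → OO n) (f : OO n) (cols : Fin (p + 1) → Fin n) :
    ∃ c : Fin (p + 1) → OO n,
      (∀ i, ∑ j, c j * MvPolynomial.pderiv (cols j) (h i) = 0) ∧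
      ∑ j, c j * MvPolynomial.pderiv (cols j) f = minorHF h f cols := by
  set A : Matrix (Fin (p + 1)) (Fin (p + 1)) (OO n) := Matrix.of fun i j =>
    Fin.lastCases (MvPolynomial.pderiv (cols j) f)
      (fun i' => MvPolynomial.pderiv (cols j) (h i')) i with hA
  have key : ∀ i, ∑ j, A i j * A.adjugate j (Fin.last p) =
      if i = Fin.last p then A.det else 0 := by
    intro i
    rw [← Matrix.mul_apply, Matrix.mul_adjugate, Matrix.smul_apply, Matrix.one_apply]
    simp
  refine ⟨fun j => A.adjugate j (Fin.last p), fun i => ?_, ?_⟩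
  · have := key i.castSucc
    rw [if_neg (Fin.castSucc_lt_last i).ne] at this
    rw [← this]
    refine Finset.sum_congr rfl fun j _ => ?_
    rw [mul_comm]; simp [hA]
  · have := key (Fin.last p)
    rw [if_pos rfl] at this
    rw [minorHF, ← hA, ← this]
    refine Finset.sum_congr rfl fun j _ => ?_
    rw [mul_comm]; simp [hA]

lemma der_prod (D : Derivation ℂ (KK n) (KK n)) {p : ℕ} (h : Fin p → OO n)
    (hD : ∀ i, D (toK (h i)) = 0) : D (toK (∏ i, h i)) = 0 := by
  classical
  have : ∀ s : Finset (Fin p), D (toK (∏ i ∈ s, h i)) = 0 := by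
    intro s
    induction s using Finset.induction_on with
    | empty => rw [Finset.prod_empty, toK, map_one]; simp
    | insert a s ha ih => rw [Finset.prod_insert ha, toK_mul, Derivation.leibniz, ih, hD]; simp
  exact this _

lemma minor_mem (hd : ExtendsPderiv d) (hf : toK f ≠ 0) {p : ℕ} (h : Fin p → OO n)
    (cols : Fin (p + 1) → Fin n) {N : Submodule ℂ (Polynomial (KK n))} (hN : Stable d f N)
    (hm : Polynomial.C (toK f * (toK (∏ i, h i))⁻¹) ∈ N) :
    bK (Polynomial.X + 1) * Polynomial.C (toK (minorHF h f cols) * (toK (∏ i, h i))⁻¹) ∈ N := by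
  obtain ⟨c, hc1, hc2⟩ := minor_cofactor h f cols
  set δ := (toK (∏ i, h i))⁻¹ with hδ
  let D : Derivation ℂ (KK n) (KK n) := ∑ j, toK (c j) • d (cols j)
  have hDapp : ∀ x, D x = ∑ j, toK (c j) * d (cols j) x := by
    intro x
    have : ∀ s : Finset (Fin (p + 1)), (∑ j ∈ s, toK (c j) • d (cols j)) x =
        ∑ j ∈ s, toK (c j) * d (cols j) x := by
      intro s
      induction s using Finset.induction_on with
      | empty => simp
      | insert a s ha ih =>
        rw [Finset.sum_insert ha, Finset.sum_insert ha, Derivation.add_apply, ih,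
          Derivation.smul_apply, smul_eq_mul]
    exact this Finset.univ
  have hDr : ∀ r, D (toK r) = toK (∑ j, c j * MvPolynomial.pderiv (cols j) r) := by
    intro r
    rw [hDapp, toK, toK, map_sum]
    refine Finset.sum_congr rfl fun j _ => ?_
    rw [map_mul]
    exact congrArg _ (hd _ _)
  have hDδ : D δ = 0 := by
    rw [hδ, Derivation.leibniz_inv, der_prod D h (fun i => by rw [hDr, hc1, toK, map_zero])]
    simp
  have hDf : D (toK f) = toK (minorHF h f cols) := by rw [hDr, hc2]
  have : bK (Polynomial.X + 1) * Polynomial.C (toK (minorHF h f cols) * δ) =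
      ∑ j, Polynomial.C (toK (c j)) * Dop (d (cols j)) f (Polynomial.C (toK f * δ)) := by
    have e : ∀ j, Polynomial.C (toK (c j)) * Dop (d (cols j)) f (Polynomial.C (toK f * δ)) =
        cst (toK (c j) * d (cols j) (toK f * δ)) +
          Polynomial.X * (Polynomial.C δ * cst (toK (c j) * d (cols j) (toK f))) := by
      intro j
      rw [Dop_apply, coeffDer_C, cst_apply, cst_apply]
      have e1 : d (cols j) (toK f) = d (cols j) (toK f) / toK f * toK f := by field_simp
      conv_rhs => rw [e1]
      simp only [Polynomial.C_mul]
      ring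
    rw [Finset.sum_congr rfl fun j _ => e j, Finset.sum_add_distrib, ← Finset.mul_sum,
      ← Finset.mul_sum, ← map_sum, ← map_sum, ← hDapp, ← hDapp, Derivation.leibniz, hDδ, hDf,
      bK_add, bK_X, bK_one, cst_apply, cst_apply]
    simp only [smul_eq_mul, mul_zero, zero_add, Polynomial.C_mul]
    ring
  rw [this]
  exact Submodule.sum_mem _ fun j _ => hN.mul _ _ (hN.der _ _ hm)

/-- everything with denominators lies in some `𝒟[s] δ f^{s-j}`. -/
lemma exists_mem_N (hd : ExtendsPderiv d) (N : ℕ → Submodule ℂ (Polynomial (KK n)))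
    (hN : ∀ j, Stable d f (N j)) (hmono : Monotone N) (δ : KK n) {V : Submodule ℂ (KK n)}
    (hVf : ∀ x ∈ V, (toK f)⁻¹ * x ∈ V) (hV : ∀ j, polySub V ≤ N j)
    (hδ : ∀ j, Polynomial.C (δ * (toK f)⁻¹ ^ j) ∈ N j) (x : KK n) (hx : x ∈ DSpan0 d {δ} ⊔ V)
    (a : ℕ) : ∃ j, Polynomial.C (x * (toK f)⁻¹ ^ a) ∈ N j := by
  let W : Submodule ℂ (KK n) :=
    { carrier := {x | ∀ a : ℕ, ∃ j, Polynomial.C (x * (toK f)⁻¹ ^ a) ∈ N j}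
      add_mem' := by
        intro x y hx hy a
        obtain ⟨i, hi⟩ := hx a
        obtain ⟨j, hj⟩ := hy a
        refine ⟨max i j, ?_⟩
        rw [add_mul, Polynomial.C_add]
        exact add_mem (hmono (le_max_left _ _) hi) (hmono (le_max_right _ _) hj)
      zero_mem' := by
        intro a
        refine ⟨0, ?_⟩
        rw [zero_mul, Polynomial.C_0]; exact zero_mem _
      smul_mem' := by
        intro c x hx a
        obtain ⟨i, hi⟩ := hx a
        refine ⟨i, ?_⟩
        have := (N i).smul_mem c hi
        rw [← cst_apply, ← map_smul, cst_apply, ← smul_mul_assoc] at this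
        exact this }
  have hW : Stable0 d W := by
    constructor
    · intro r x hx a
      obtain ⟨i, hi⟩ := hx a
      refine ⟨i, ?_⟩
      rw [mul_assoc, Polynomial.C_mul]
      exact (hN i).mul r _ hi
    · intro i x hx a
      obtain ⟨j, hj⟩ := hx a
      obtain ⟨l, hl⟩ := hx (a + 1)
      refine ⟨max j l, ?_⟩
      have hj := hmono (le_max_left j l) hj
      have hl := hmono (le_max_right j l) hl
      have h1 := (hN _).der i _ hj
      have h2 := (hN _).mul (MvPolynomial.pderiv i f) _ hl
      have h3 := (hN _).mulX _ h2
      have h4 := Submodule.smul_mem _ (a : ℂ) h2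
      have := add_mem h1 (sub_mem h4 h3)
      convert this using 1
      rw [Dop_apply, coeffDer_C, Derivation.leibniz, Derivation.leibniz_pow,
        Derivation.leibniz_inv, ← hd]
      simp only [smul_eq_mul, nsmul_eq_mul, div_eq_mul_inv, Polynomial.C_mul, Polynomial.C_pow,
        Polynomial.C_add, Polynomial.C_neg, Algebra.smul_def, map_natCast]
      rcases a with _ | a
      · simp; ring
      · simp only [Nat.add_sub_cancel]; push_cast; ring
  have : DSpan0 d {δ} ⊔ V ≤ W := by
    refine sup_le (DSpan0_le hW ?_) ?_
    · rintro _ rfl a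
      exact ⟨a, hδ a⟩
    · intro x hx a
      refine ⟨0, hV 0 (polySub_C ?_)⟩
      rw [mul_comm]
      exact finv_pow hVf a x hx
  exact this hx a

lemma bK_comp (b : Polynomial ℂ) (j : ℕ) :
    (bK b).comp (Polynomial.X - (j : Polynomial (KK n))) =
      bK (b.comp (Polynomial.X - (j : Polynomial ℂ))) := by
  simp [bK, Polynomial.map_comp]

end Aux

open Aux

set_option maxHeartbeats 10000000 in
theorem Aux.core (n p : ℕ)
    (d : Fin n → Derivation ℂ (KK n) (KK n)) (hd : ExtendsPderiv d)
    (h : Fin p → OO n) (f : OO n) (hh : ∀ i, h i ≠ 0) (hf : f ≠ 0)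
    -- `δ_h = 1/(h₁⋯h_p)` and `δ_{h,f} = 1/(h₁⋯h_p·f)` in `K`
    (delta deltaf : KK n)
    (hdelta : delta = (toK (∏ i, h i))⁻¹) (hdeltaf : deltaf = (toK (f * ∏ i, h i))⁻¹)
    -- `Σᵢ 𝒪[1/(h₁⋯ȟᵢ⋯h_p)]`, so that `ℛ_h = 𝒪[1/h₁⋯h_p] mod Wh`
    (Wh : Submodule ℂ (KK n))
    (hWh : Wh = locSub {x | ∃ i : Fin p, x = ∏ j ∈ Finset.univ.erase i, h j})
    -- the analogous submodule for the morphism `(h,f)`, so that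
    -- `ℛ_{h,f} = 𝒪[1/(h₁⋯h_p·f)] mod Whf`
    (Whf : Submodule ℂ (KK n))
    (hWhf : Whf = locSub ({x | ∃ i : Fin p, x = f * ∏ j ∈ Finset.univ.erase i, h j}
      ∪ {∏ i, h i}))
    -- `ℒ_{h,f} = Σ 𝒟·(m_{k₁,…,k_{p+1}}(h,f)·δ_{h,f})` inside `ℛ_{h,f}`
    (L : Submodule ℂ (KK n))
    (hL : L = DSpan0 d {x | ∃ cols : Fin (p + 1) → Fin n, StrictMono cols ∧
        x = toK (minorHF h f cols) * deltaf})
    -- hypothesis `𝒟δ_h = ℛ_h`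
    (hgen : ∀ (r : OO n) (k : ℕ),
      toK r * (toK (∏ i, h i))⁻¹ ^ k ∈ DSpan0 d {delta} ⊔ Wh)
    -- the ambient `𝒟[s]`-module for `δ_h f^s` is `K[s]` modulo `polySub V`
    (V : Submodule ℂ (KK n))
    (hV : V = locSub {x | ∃ i : Fin p, x = f * ∏ j ∈ Finset.univ.erase i, h j})
    -- `b'` is the monic generator `b'_f(h,s)` of the ideal of `b(s)` with
    -- `b(s) δ_h f^s ∈ 𝒟[s](𝒥_{h,f}, f) δ_h f^s`
    (memB' : Polynomial ℂ → Prop)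
    (hmemB' : ∀ b : Polynomial ℂ, memB' b ↔
      bK b * Polynomial.C delta ∈
        DSpan d f ({y | ∃ cols : Fin (p + 1) → Fin n, StrictMono cols ∧
            y = Polynomial.C (toK (minorHF h f cols) * delta)} ∪
          {Polynomial.C (toK f * delta)}) ⊔ polySub V)
    (b' : Polynomial ℂ) (hb'1 : b'.Monic) (hb'2 : memB' b')
    (hb'3 : ∀ c : Polynomial ℂ, memB' c → b' ∣ c)
    (hLR : ∀ (r : OO n) (k : ℕ), toK r * (toK (f * ∏ i, h i))⁻¹ ^ k ∈ L ⊔ Whf) :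
    b'.eval (-1) ≠ 0 ∧ (∀ k : ℤ, k < 0 → b'.eval (k : ℂ) ≠ 0) := by
  
  classical
  set H : OO n := ∏ i, h i with hHdef
  have hH0 : H ≠ 0 := Finset.prod_ne_zero_iff.2 fun i _ => hh i
  have hHK := toK_ne hH0
  have hfK := toK_ne hf
  have hei : ∀ i, H = h i * ∏ j ∈ Finset.univ.erase i, h j := fun i =>
    (Finset.mul_prod_erase _ _ (Finset.mem_univ i)).symm
  have he0 : ∀ i, ∏ j ∈ Finset.univ.erase i, h j ≠ 0 := fun i =>
    Finset.prod_ne_zero_iff.2 fun i _ => hh i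
  have hVst : Stable0 d V := hV ▸ locSub_stable hd _
  have hVf : ∀ x ∈ V, (toK f)⁻¹ * x ∈ V := by
    rw [hV]
    refine locSub_finv hfK ?_
    rintro g ⟨i, rfl⟩
    exact ⟨_, rfl, he0 i⟩
  have hPV : Stable d f (polySub V) := polySub_stable hd hVst hVf
  have hWhV : Wh ≤ V := by
    rw [hWh]
    refine locSub_le ?_
    rintro r g ⟨i, rfl⟩ k
    have : toK r * (toK (∏ j ∈ Finset.univ.erase i, h j))⁻¹ ^ k =
        toK (r * f ^ k) * (toK (f * ∏ j ∈ Finset.univ.erase i, h j))⁻¹ ^ k := by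
      simp only [toK_mul, toK_pow, mul_inv, mul_pow, inv_pow]
      field_simp
    rw [this, hV]
    refine mem_locSub _ ?_ _
    exact ⟨i, rfl⟩
  -- the big localization
  obtain ⟨R, hR⟩ : ∃ R : Submodule ℂ (KK n), R = locSub {f * H} := ⟨_, rfl⟩
  have hRst : Stable0 d R := hR ▸ locSub_stable hd _
  have hRf : ∀ x ∈ R, (toK f)⁻¹ * x ∈ R := by
    rw [hR]
    refine locSub_finv hfK ?_
    rintro g rfl
    exact ⟨H, rfl, hH0⟩
  have hVR : V ≤ R := by
    rw [hV]
    refine locSub_le ?_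
    rintro r g ⟨i, rfl⟩ k
    have hi := toK_ne (hh i)
    have : toK r * (toK (f * ∏ j ∈ Finset.univ.erase i, h j))⁻¹ ^ k =
        toK (r * h i ^ k) * (toK (f * H))⁻¹ ^ k := by
      rw [hei i]
      simp only [toK_mul, toK_pow, mul_inv, mul_pow, inv_pow]
      field_simp
    rw [this, hR]
    exact mem_locSub _ (Set.mem_singleton _) _
  have hdR : delta ∈ R := by
    have : delta = toK f * (toK (f * H))⁻¹ ^ 1 := by
      rw [hdelta, toK_mul]; field_simp
    rw [this, hR]
    exact mem_locSub _ (Set.mem_singleton _) _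
  -- modules
  obtain ⟨Nn, hNn⟩ : ∃ Nn : Set (Polynomial (KK n)) → Submodule ℂ (Polynomial (KK n)),
    ∀ T, Nn T = DSpan d f T ⊔ polySub V := ⟨_, fun _ => rfl⟩
  have hNst : ∀ T, Stable d f (Nn T) :=
    fun T => by rw [hNn]; exact (DSpan_stable T).sup hPV
  have hNV : ∀ T, polySub V ≤ Nn T := fun T => by rw [hNn]; exact le_sup_right
  have hNT : ∀ T : Set (Polynomial (KK n)), T ⊆ (Nn T : Set (Polynomial (KK n))) := fun T t ht => by
    rw [hNn]; exact Submodule.mem_sup_left (subset_DSpan T ht)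
  have hNle : ∀ (T : Set (Polynomial (KK n))) (M : Submodule ℂ (Polynomial (KK n))),
      Stable d f M → T ⊆ (M : Set (Polynomial (KK n))) → polySub V ≤ M →
      Nn T ≤ M := fun T M h1 h2 h3 => by rw [hNn]; exact sup_le (DSpan_le h1 h2) h3
  have hNC : ∀ x, Polynomial.C x ∈ Nn {Polynomial.C x} := fun x => hNT _ rfl
  have hPVb : ∀ (b : Polynomial ℂ) (M : Submodule ℂ (Polynomial (KK n))), polySub V ≤ M →
      polySub V ≤ M.comap (mulOp (bK b)) := fun b M hM x hx => hM (hPV.bK_mul b hx)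
  set T' : Set (Polynomial (KK n)) :=
    ({y | ∃ cols : Fin (p + 1) → Fin n, StrictMono cols ∧
            y = Polynomial.C (toK (minorHF h f cols) * delta)} ∪
          {Polynomial.C (toK f * delta)}) with hT'
  have hmemN : ∀ b, memB' b ↔ bK b * Polynomial.C delta ∈ Nn T' := by
    intro b; rw [hmemB' b, hNn]
  clear hmemB' hNn
  let N : ℕ → Submodule ℂ (Polynomial (KK n)) :=
    fun j => Nn {Polynomial.C (delta * (toK f)⁻¹ ^ j)}
  have hNj : ∀ j, Polynomial.C (delta * (toK f)⁻¹ ^ j) ∈ N j := fun j => hNC _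
  have hd0 : Polynomial.C delta ∈ N 0 := by simpa using hNj 0
  have hmono : Monotone N := by
    refine monotone_nat_of_le_succ fun j => hNle _ _ (hNst _) ?_ (hNV _)
    rintro _ rfl
    have : Polynomial.C (delta * (toK f)⁻¹ ^ j) =
        Polynomial.C (toK f) * Polynomial.C (delta * (toK f)⁻¹ ^ (j + 1)) := by
      rw [← Polynomial.C_mul, pow_succ]; congr 1; field_simp
    rw [this]
    exact (hNst _).mul _ _ (hNj _)
  -- the functional equation
  have hb0 : bK ((Polynomial.X + 1) * b') * Polynomial.C delta ∈
      Nn {Polynomial.C (toK f * delta)} := by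
    have hle : Nn T' ≤ (Nn {Polynomial.C (toK f * delta)}).comap
        (mulOp (bK (Polynomial.X + 1))) := by
      refine hNle _ _ ((hNst _).comap_bK _) ?_ (hPVb _ _ (hNV _))
      rintro y (⟨cols, _, rfl⟩ | rfl)
      · have h2 : Polynomial.C (toK f * delta) ∈ Nn {Polynomial.C (toK f * delta)} := hNC _
        rw [SetLike.mem_coe, Submodule.mem_comap, mulOp_apply]
        have h3 := hNst {Polynomial.C (toK f * delta)}
        generalize Nn {Polynomial.C (toK f * delta)} = M at h2 h3 ⊢
        rw [hdelta] at h2 ⊢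
        exact minor_mem hd hfK h cols h3 h2
      · exact (hNst _).bK_mul _ (hNC _)
    rw [bK_mul, mul_assoc]
    exact hle ((hmemN b').1 hb'2)
  have hstep : ∀ j, ∀ x ∈ N (j + 1),
      bK (((Polynomial.X + 1) * b').comp (Polynomial.X - ((j + 1 : ℕ) : Polynomial ℂ))) * x ∈ N j := by
    intro j
    have hle : Nn {Polynomial.C (toK f * delta)} ≤ (N j).comap (tau f (j + 1)) := by
      refine hNle _ _ ((hNst _).comap_tau _) ?_ ?_
      · rintro _ rfl
        rw [SetLike.mem_coe, Submodule.mem_comap]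
        have : tau f (j + 1) (Polynomial.C (toK f * delta)) =
            Polynomial.C (delta * (toK f)⁻¹ ^ j) := by
          rw [tau_apply, Polynomial.C_comp, ← Polynomial.C_mul, pow_succ]
          congr 1; field_simp
        rw [this]; exact hNj j
      · exact (polySub_tau hd hVst hVf (j + 1)).trans (Submodule.comap_mono (hNV _))
    have h1 := hle hb0
    rw [Submodule.mem_comap, tau_apply, Polynomial.mul_comp, Polynomial.C_comp, bK_comp] at h1
    refine hNle {Polynomial.C (delta * (toK f)⁻¹ ^ (j + 1))} ((N j).comap (mulOp (bK _)))
      ((hNst _).comap_bK _) ?_ (hPVb _ _ (hNV _))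
    rintro _ rfl
    rw [SetLike.mem_coe, Submodule.mem_comap, mulOp_apply]
    convert h1 using 1
    rw [Polynomial.C_mul]; ring
  -- everything is in some N j
  have hex : ∀ g ∈ polySub R, ∃ j, g ∈ N j := by
    have hle : polySub R ≤ ⨆ j, N j := by
      refine polySub_le ?_ ?_
      · intro x hx
        rw [Submodule.mem_iSup_of_directed _ hmono.directed_le] at hx ⊢
        obtain ⟨j, hj⟩ := hx
        exact ⟨j, (hNst _).mulX _ hj⟩
      · have : R ≤ (⨆ j, N j).comap cst := by
          rw [hR]
          refine locSub_le ?_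
          rintro r g rfl k
          rw [Submodule.mem_comap, Submodule.mem_iSup_of_directed _ hmono.directed_le]
          obtain ⟨j, hj⟩ := exists_mem_N hd N (fun j => hNst _) hmono delta hVf
            (fun j => hNV _) hNj _ (sup_le_sup_left hWhV _ (hgen r k)) k
          refine ⟨j, ?_⟩
          rw [cst_apply]
          convert hj using 2
          rw [toK_mul, mul_inv, mul_pow]; ring
        exact this
    intro g hg
    exact (Submodule.mem_iSup_of_directed _ hmono.directed_le).1 (hle hg)
  have hN0R : N 0 ≤ polySub R := by
    refine hNle _ _ (polySub_stable hd hRst hRf) ?_ (fun x hx m => hVR (hx m))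
    rintro _ rfl
    simpa using polySub_C hdR
  have hN'0 : Nn T' ≤ N 0 := by
    refine hNle _ _ (hNst _) ?_ (hNV _)
    rintro y (⟨cols, _, rfl⟩ | rfl)
    · rw [Polynomial.C_mul]; exact (hNst _).mul _ _ hd0
    · rw [Polynomial.C_mul]; exact (hNst _).mul _ _ hd0
  -- key claim
  have key : ∀ k : ℕ, 1 ≤ k → (∀ l : ℕ, k < l → b'.eval (-(l : ℂ)) ≠ 0) →
      b'.eval (-(k : ℂ)) ≠ 0 := by
    intro k hk hl hroot
    -- specialization
    have hE : Stable0 d ((Nn T').map (evk f k)) := (hNst _).map_evk k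
    set E := (Nn T').map (evk f k) with hEdef
    have hEC : ∀ x, Polynomial.C x ∈ Nn T' → (toK f)⁻¹ ^ k * x ∈ E := by
      intro x hx
      exact ⟨_, hx, by rw [evk_apply, Polynomial.eval_C]⟩
    have hVE : V ≤ E := by
      intro x hx
      have hx' : toK f ^ k * x ∈ V := by
        rw [← toK_pow]; exact hVst.mul _ _ hx
      have := hEC _ (hNV _ (polySub_C hx'))
      convert this using 1
      rw [inv_pow]; field_simp
    obtain ⟨k', rfl⟩ : ∃ k', k = k' + 1 := ⟨k - 1, by omega⟩
    have hdE : delta ∈ E := by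
      have := hE.mul (f ^ k') _ (hEC (toK f * delta) (hNT _ (Or.inr rfl)))
      convert this using 1
      rw [toK_pow, pow_succ, inv_pow]; field_simp
    have hmE : ∀ cols : Fin (p + 1) → Fin n, StrictMono cols →
        toK (minorHF h f cols) * deltaf ∈ E := by
      intro cols hc
      have := hE.mul (f ^ k') _ (hEC (toK (minorHF h f cols) * delta) (hNT _ (Or.inl ⟨cols, hc, rfl⟩)))
      convert this using 1
      rw [toK_pow, pow_succ, inv_pow, hdeltaf, hdelta, toK_mul]; field_simp
    have hLE : L ≤ E := by
      rw [hL]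
      refine DSpan0_le hE ?_
      rintro x ⟨cols, hc, rfl⟩
      exact hmE cols hc
    have hgE : DSpan0 d {delta} ⊔ Wh ≤ E := by
      refine sup_le (DSpan0_le hE ?_) (hWhV.trans hVE)
      rintro _ rfl
      exact hdE
    have hWE : Whf ≤ E := by
      rw [hWhf]
      refine locSub_le ?_
      rintro r g (hg | rfl) m
      · apply hVE
        rw [hV]
        exact mem_locSub r hg m
      · exact hgE (hgen r m)
    have hfin : delta * (toK f)⁻¹ ^ (k' + 1) ∈ E := by
      have := sup_le hLE hWE (hLR (H ^ k') (k' + 1))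
      convert this using 1
      rw [toK_mul, hdelta, mul_inv, mul_pow, toK_pow, pow_succ (toK H)⁻¹, inv_pow (toK H)]; field_simp
    obtain ⟨u, hu, hue⟩ := hfin
    have hue' : u.eval (-((k' + 1 : ℕ) : KK n)) = delta := by
      rw [evk_apply, mul_comm] at hue
      exact mul_right_cancel₀ (pow_ne_zero _ (inv_ne_zero hfK)) hue
    have hw : Polynomial.C delta - u ∈ N 0 := sub_mem hd0 (hN'0 hu)
    set c : ℂ := -((k' + 1 : ℕ) : ℂ) with hc
    obtain ⟨q, hq, e, hqe⟩ := exists_div c _ (hN0R hw)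
    have hbKc : bK (n := n) (Polynomial.X - Polynomial.C c) =
        Polynomial.X + ((k' + 1 : ℕ) : Polynomial (KK n)) := by
      simp [bK, hc]
      ring
    have he : e = 0 := by
      have := congrArg (Polynomial.eval (-((k' + 1 : ℕ) : KK n))) hqe
      rw [hbKc] at this
      simp only [Polynomial.eval_sub, Polynomial.eval_C, Polynomial.eval_add, Polynomial.eval_mul,
        Polynomial.eval_X, Polynomial.eval_natCast, hue'] at this
      rw [sub_self, neg_add_cancel, zero_mul, zero_add] at this
      exact this.symm
    rw [he, Polynomial.C_0, add_zero] at hqe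
    obtain ⟨j, hj⟩ := hex q hq
    have hB : ∀ j, ∃ B : Polynomial ℂ, B.eval c ≠ 0 ∧ ∀ x ∈ N j, bK B * x ∈ N 0 := by
      intro j
      induction j with
      | zero => exact ⟨1, by simp, fun x hx => by rw [bK_one, one_mul]; exact hx⟩
      | succ j ih =>
        obtain ⟨B, hB1, hB2⟩ := ih
        refine ⟨B * (((Polynomial.X + 1) * b').comp
          (Polynomial.X - ((j + 1 : ℕ) : Polynomial ℂ))), ?_, ?_⟩
        · rw [Polynomial.eval_mul]
          refine mul_ne_zero hB1 ?_
          rw [Polynomial.eval_comp, Polynomial.eval_mul]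
          have e1 : Polynomial.eval c (Polynomial.X - ((j + 1 : ℕ) : Polynomial ℂ)) =
              -((k' + 1 + (j + 1) : ℕ) : ℂ) := by
            rw [Polynomial.eval_sub, Polynomial.eval_X, Polynomial.eval_natCast, hc]
            push_cast; ring
          rw [e1]
          refine mul_ne_zero ?_ (hl _ (by omega))
          rw [Polynomial.eval_add, Polynomial.eval_X, Polynomial.eval_one]
          have : (-((k' + 1 + (j + 1) : ℕ) : ℂ) + 1) = -((k' + j + 1 : ℕ) : ℂ) := by
            push_cast; ring
          rw [this, neg_ne_zero]
          exact Nat.cast_ne_zero.2 (by omega)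
        · intro x hx
          rw [bK_mul, mul_assoc]
          exact hB2 _ (hstep j x hx)
    obtain ⟨B, hB1, hB2⟩ := hB j
    obtain ⟨C', hC'⟩ : Polynomial.X - Polynomial.C c ∣ B - Polynomial.C (B.eval c) :=
      Polynomial.X_sub_C_dvd_sub_C_eval
    have hBeq : B = Polynomial.C (B.eval c) + (Polynomial.X - Polynomial.C c) * C' := by
      rw [← hC']; ring
    obtain ⟨b1, hb1⟩ : Polynomial.X - Polynomial.C c ∣ b' :=
      Polynomial.dvd_iff_isRoot.2 hroot
    -- `b' N ⊆ N'`
    have hbN : ∀ x ∈ N 0, bK b' * x ∈ Nn T' := by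
      refine hNle {Polynomial.C (delta * (toK f)⁻¹ ^ 0)} ((Nn T').comap (mulOp (bK b')))
        ((hNst _).comap_bK _) ?_ (hPVb _ _ (hNV _))
      rintro _ rfl
      rw [SetLike.mem_coe, Submodule.mem_comap, mulOp_apply]
      rw [pow_zero, mul_one]
      exact (hmemN b').1 hb'2
    have hv : bK B * q - bK C' * (Polynomial.C delta - u) ∈ N 0 :=
      sub_mem (hB2 q hj) ((hNst _).bK_mul _ hw)
    have heq : B.eval c • (Polynomial.C delta - u) = bK (Polynomial.X - Polynomial.C c) *
        (bK B * q - bK C' * (Polynomial.C delta - u)) := by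
      rw [← bK_C_mul]
      have h1 : bK (n := n) B = bK (Polynomial.C (B.eval c)) +
          bK (Polynomial.X - Polynomial.C c) * bK C' := by
        rw [← bK_mul, ← bK_add, ← hBeq]
      linear_combination bK B * hqe - (Polynomial.C delta - u) * h1
    have hb1w : bK b1 * (B.eval c • (Polynomial.C delta - u)) ∈ Nn T' := by
      rw [heq, ← mul_assoc, ← bK_mul, mul_comm b1, ← hb1]
      exact hbN _ hv
    rw [mul_smul_comm, Submodule.smul_mem_iff _ hB1] at hb1w
    have hmem : memB' b1 := by
      rw [hmemN]
      have := add_mem hb1w ((hNst T').bK_mul b1 hu)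
      rw [← mul_add, sub_add_cancel] at this
      exact this
    have hdvd := hb'3 b1 hmem
    have hb1ne : b1 ≠ 0 := by
      rintro rfl
      rw [mul_zero] at hb1
      exact hb'1.ne_zero hb1
    have hdeg := Polynomial.natDegree_le_of_dvd hdvd hb1ne
    rw [hb1, Polynomial.natDegree_mul (Polynomial.X_sub_C_ne_zero c) hb1ne,
      Polynomial.natDegree_X_sub_C] at hdeg
    omega
  -- conclude
  have hall : ∀ k : ℕ, 1 ≤ k → b'.eval (-(k : ℂ)) ≠ 0 := by
    by_contra hcon
    push Not at hcon
    have hfinS : {k : ℕ | 1 ≤ k ∧ b'.eval (-(k : ℂ)) = 0}.Finite := by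
      have h1 : {z : ℂ | b'.IsRoot z}.Finite :=
        Polynomial.finite_setOfPred_isRoot hb'1.ne_zero
      refine (h1.preimage (f := fun k : ℕ => -(k : ℂ)) ?_).subset (fun k hk => hk.2)
      intro a _ b _ hab
      simpa using hab
    obtain ⟨k, ⟨hk1, hk2⟩, hmax⟩ := hfinS.exists_maximal hcon
    refine key k hk1 (fun l hl h0 => ?_) hk2
    have := hmax ⟨by omega, h0⟩ hl.le
    omega
  refine ⟨by simpa using hall 1 le_rfl, fun k hk => ?_⟩
  have := hall k.natAbs (by omega)
  have e : (k : ℂ) = -((k.natAbs : ℕ) : ℂ) := by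
    have : k = -(k.natAbs : ℤ) := by omega
    conv_lhs => rw [this]
    rw [Int.cast_neg, Int.cast_natCast]
  rw [e]; exact this

/-- converse direction of the main theorem: if `𝒟δ_h = ℛ_h` and `ℒ_{h,f} = ℛ_{h,f}`, then `−1` is not a root of `b'_f(h,s)` and `b'_f(h,s)` has no strictly negative integral root. -/
theorem main_theorem_converse (n p : ℕ)
    (d : Fin n → Derivation ℂ (KK n) (KK n)) (hd : ExtendsPderiv d)
    (h : Fin p → OO n) (f : OO n) (hh : ∀ i, h i ≠ 0) (hf : f ≠ 0)
    -- `δ_h = 1/(h₁⋯h_p)` and `δ_{h,f} = 1/(h₁⋯h_p·f)` in `K`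
    (delta deltaf : KK n)
    (hdelta : delta = (toK (∏ i, h i))⁻¹) (hdeltaf : deltaf = (toK (f * ∏ i, h i))⁻¹)
    -- `Σᵢ 𝒪[1/(h₁⋯ȟᵢ⋯h_p)]`, so that `ℛ_h = 𝒪[1/h₁⋯h_p] mod Wh`
    (Wh : Submodule ℂ (KK n))
    (hWh : Wh = locSub {x | ∃ i : Fin p, x = ∏ j ∈ Finset.univ.erase i, h j})
    -- the analogous submodule for the morphism `(h,f)`, so that
    -- `ℛ_{h,f} = 𝒪[1/(h₁⋯h_p·f)] mod Whf`
    (Whf : Submodule ℂ (KK n))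
    (hWhf : Whf = locSub ({x | ∃ i : Fin p, x = f * ∏ j ∈ Finset.univ.erase i, h j}
      ∪ {∏ i, h i}))
    -- `ℒ_{h,f} = Σ 𝒟·(m_{k₁,…,k_{p+1}}(h,f)·δ_{h,f})` inside `ℛ_{h,f}`
    (L : Submodule ℂ (KK n))
    (hL : L = DSpan0 d {x | ∃ cols : Fin (p + 1) → Fin n, StrictMono cols ∧
        x = toK (minorHF h f cols) * deltaf})
    -- hypothesis `𝒟δ_h = ℛ_h`
    (hgen : ∀ (r : OO n) (k : ℕ),
      toK r * (toK (∏ i, h i))⁻¹ ^ k ∈ DSpan0 d {delta} ⊔ Wh)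
    -- the ambient `𝒟[s]`-module for `δ_h f^s` is `K[s]` modulo `polySub V`
    (V : Submodule ℂ (KK n))
    (hV : V = locSub {x | ∃ i : Fin p, x = f * ∏ j ∈ Finset.univ.erase i, h j})
    -- `b'` is the monic generator `b'_f(h,s)` of the ideal of `b(s)` with
    -- `b(s) δ_h f^s ∈ 𝒟[s](𝒥_{h,f}, f) δ_h f^s`
    (memB' : Polynomial ℂ → Prop)
    (hmemB' : ∀ b : Polynomial ℂ, memB' b ↔
      bK b * Polynomial.C delta ∈
        DSpan d f ({y | ∃ cols : Fin (p + 1) → Fin n, StrictMono cols ∧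
            y = Polynomial.C (toK (minorHF h f cols) * delta)} ∪
          {Polynomial.C (toK f * delta)}) ⊔ polySub V)
    (b' : Polynomial ℂ) (hb'1 : b'.Monic) (hb'2 : memB' b')
    (hb'3 : ∀ c : Polynomial ℂ, memB' c → b' ∣ c)
    (hLR : ∀ (r : OO n) (k : ℕ), toK r * (toK (f * ∏ i, h i))⁻¹ ^ k ∈ L ⊔ Whf) :
    b'.eval (-1) ≠ 0 ∧ (∀ k : ℤ, k < 0 → b'.eval (k : ℂ) ≠ 0) := by
  
  exact Aux.core n p d hd h f hh hf delta deltaf hdelta hdeltaf Wh hWh Whf hWhf L hL hgen V hV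
    memB' hmemB' b' hb'1 hb'2 hb'3 hLR
end
end

section
/- Explicit computation: let n be even, g = x₁² + ⋯ + xₙ², h = g^ℓ with ℓ ≥ 1, and f = x₁. Then (s + n − 2ℓ) δ_h x₁^s = (Σᵢ ∂/∂xᵢ · xᵢ) · δ_h x₁^s, and for 2 ≤ i ≤ n, j ≥ 1: ∂/∂xᵢ [2(j−ℓ)g^{j−1}x₁² + Σ_{k=2}^n ∂/∂x_k · x_k g^j] · δ_h x₁^s = 2(j−ℓ)(n + 2(j−ℓ) − 1) xᵢ g^{j−1} δ_h x₁^s. Consequently, for n even and ℓ ≥ n/2, b'_{x₁}(h,s) = (s + n − 2ℓ). -/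
open Polynomial

noncomputable section

set_option maxHeartbeats 1000000
set_option synthInstance.maxHeartbeats 400000

variable {n : ℕ}

lemma toK_add (a b : OO n) : toK (a+b) = toK a + toK b := map_add _ _ _
lemma toK_sub (a b : OO n) : toK (a-b) = toK a - toK b := map_sub _ _ _
lemma toK_mul (a b : OO n) : toK (a*b) = toK a * toK b := map_mul _ _ _
lemma toK_pow (a : OO n) (k : ℕ) : toK (a^k) = toK a ^ k := map_pow _ _ _
lemma toK_zero : toK (0 : OO n) = 0 := map_zero _
lemma toK_one : toK (1 : OO n) = 1 := map_one _
lemma toK_sum {ι : Type*} (s : Finset ι) (a : ι → OO n) : toK (∑ i ∈ s, a i) = ∑ i ∈ s, toK (a i) := map_sum _ _ _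
lemma toK_inj {a b : OO n} (h : toK a = toK b) : a = b := IsFractionRing.injective (OO n) (KK n) h
lemma toK_C (c : ℂ) : toK (MvPolynomial.C c : OO n) = algebraMap ℂ (KK n) c := by
  rw [IsScalarTower.algebraMap_apply ℂ (OO n) (KK n)]; rfl
lemma toK_smul (c : ℂ) (a : OO n) : toK (c • a) = c • toK a := by
  rw [Algebra.smul_def, Algebra.smul_def, toK_mul, ← toK_C]; rfl
lemma toK_ne {a : OO n} (h : a ≠ 0) : toK a ≠ 0 := fun h' => h (toK_inj (h'.trans toK_zero.symm))

lemma coeffDer_C (d : Derivation ℂ (KK n) (KK n)) (a : KK n) : coeffDer d (C a) = C (d a) := by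
  simp [coeffDer]
lemma coeffDer_X (d : Derivation ℂ (KK n) (KK n)) : coeffDer d X = 0 := by
  simp [coeffDer]

/-- Gaussian moments. -/
def mu : ℕ → ℂ
  | 0 => 1
  | 1 => 0
  | (k+2) => (k+1) * mu k

lemma mu_even (k : ℕ) : mu (2*k) ≠ 0 := by
  induction k with
  | zero => simp [mu]
  | succ k ih =>
    rw [show 2*(k+1) = 2*k+2 by ring, mu]
    refine mul_ne_zero ?_ ih
    norm_cast

/-- Gaussian expectation of the degree `e` component. -/
def Me (e : ℕ) : OO n →ₗ[ℂ] ℂ :=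
  (MvPolynomial.basisMonomials (Fin n) ℂ).constr ℂ
    (fun α => if α.degree = e then ∏ i, mu (α i) else 0)

lemma Me_monomial (e : ℕ) (α : Fin n →₀ ℕ) :
    Me e (MvPolynomial.monomial α (1:ℂ)) = if α.degree = e then ∏ i, mu (α i) else 0 := by
  have := (MvPolynomial.basisMonomials (Fin n) ℂ).constr_basis ℂ
    (fun α => if α.degree = e then ∏ i, mu (α i) else 0) α
  simpa [Me] using this

lemma lin_ext {M : Type*} [AddCommGroup M] [Module ℂ M] {A B : OO n →ₗ[ℂ] M} (h : ∀ α, A (MvPolynomial.monomial α 1) = B (MvPolynomial.monomial α 1)) :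
   A = B := by
  apply (MvPolynomial.basisMonomials (Fin n) ℂ).ext
  simpa using h

lemma Me_stein (e : ℕ) (j : Fin n) (p : OO n) :
    Me e (MvPolynomial.pderiv j p) = Me (e+2) (MvPolynomial.X j * p) := by
  suffices h : (Me e).comp (MvPolynomial.pderiv j).toLinearMap
      = (Me (e+2)).comp (LinearMap.mulLeft ℂ (MvPolynomial.X j : OO n)) from
    LinearMap.congr_fun h p
  apply lin_ext
  intro α
  have h2 : (MvPolynomial.X j : OO n) * MvPolynomial.monomial α 1 
      = MvPolynomial.monomial (α + Finsupp.single j 1) 1 := by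
    rw [MvPolynomial.X, MvPolynomial.monomial_mul, add_comm, one_mul]
  simp only [LinearMap.comp_apply, Derivation.coeFn_coe, LinearMap.mulLeft_apply, h2,
    MvPolynomial.pderiv_monomial, one_mul, Me_monomial]
  by_cases h0 : α j = 0
  · rw [h0]
    simp only [Nat.cast_zero, map_zero]
    rw [Finset.prod_eq_zero (Finset.mem_univ j)]
    · simp
    · simp [h0, mu]
  · obtain ⟨k, hk⟩ := Nat.exists_eq_succ_of_ne_zero h0
    obtain ⟨β, rfl⟩ : ∃ β, α = β + Finsupp.single j 1 := 
      ⟨α - Finsupp.single j 1, (tsub_add_cancel_of_le (by simp [Nat.one_le_iff_ne_zero, h0])).symm⟩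
    rw [add_tsub_cancel_right]
    rw [show MvPolynomial.monomial β (((β + Finsupp.single j 1 : Fin n →₀ ℕ) j : ℕ) : ℂ) = ((β j + 1 : ℂ)) • MvPolynomial.monomial β 1 by
      simp [MvPolynomial.smul_monomial]]
    rw [map_smul, Me_monomial]
    simp only [map_add, Finsupp.degree_single, add_left_inj, add_assoc, smul_eq_mul]
    norm_num
    congr 1
    rw [← Finset.mul_prod_erase _ _ (Finset.mem_univ j), ← Finset.mul_prod_erase _ (fun i => mu (β i + _)) (Finset.mem_univ j)]
    rw [← mul_assoc]
    congr 1
    · simp [mu]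
    · apply Finset.prod_congr rfl
      intro i hi
      rw [Finsupp.single_eq_of_ne (by simpa using hi)]
      simp

lemma Me_euler (e : ℕ) (p : OO n) :
    Me e (∑ j, MvPolynomial.X j * MvPolynomial.pderiv j p) = e * Me e p := by
  suffices h : (Me e).comp (∑ j : Fin n, (LinearMap.mulLeft ℂ (MvPolynomial.X j : OO n)).comp (MvPolynomial.pderiv j).toLinearMap)
      = (e:ℂ) • Me e by
    simpa using LinearMap.congr_fun h p
  apply lin_ext
  intro α
  simp only [LinearMap.comp_apply, Derivation.coeFn_coe, LinearMap.mulLeft_apply, LinearMap.sum_apply, MvPolynomial.X_mul_pderiv_monomial, map_sum, map_nsmul, Me_monomial, LinearMap.smul_apply]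
  split_ifs with h
  · rw [← Finset.sum_smul, ← h, Finsupp.degree_eq_sum]; simp
  · simp

lemma Me_g (e : ℕ) (p : OO n) :
    Me (e+2) ((∑ i : Fin n, MvPolynomial.X i ^ 2) * p) = (n + e) * Me e p := by
  rw [Finset.sum_mul, map_sum]
  have (i : Fin n) : Me (e+2) (MvPolynomial.X i ^ 2 * p) = Me e p + Me e (MvPolynomial.X i * MvPolynomial.pderiv i p) := by
    rw [pow_two, mul_assoc, ← Me_stein, Derivation.leibniz, ← map_add]
    congr 1
    simp [add_comm]
  simp only [this, Finset.sum_add_distrib]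
  have h2 := Me_euler e p
  rw [map_sum] at h2
  rw [h2]; simp; ring

lemma Me_gpow (e : ℕ) (hn : 0 < n) (k : ℕ) : ∃ c : ℂ, c ≠ 0 ∧ ∀ p : OO n,
    Me (e+2*k) ((∑ i : Fin n, MvPolynomial.X i ^ 2)^k * p) = c * Me e p := by
  induction k with
  | zero => exact ⟨1, one_ne_zero, by simp⟩
  | succ k ih => 
    obtain ⟨c, hc, h⟩ := ih
    refine ⟨(n + (e+2*k : ℕ)) * c, mul_ne_zero ?_ hc, fun p => ?_⟩
    · norm_cast; omega
    · rw [pow_succ', mul_assoc, show e+2*(k+1) = e+2*k+2 by ring, Me_g, h, mul_assoc]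

/-- vanishing on high order. -/
lemma Me_high (e : ℕ) (q a : OO n) (k : ℕ) (ha : a.IsHomogeneous k) (hk : e < k) : Me e (q * a) = 0 := by
  have key : ∀ p : OO n, ∀ k, e < k → p.IsHomogeneous k → Me e p = 0 := by
    intro p k hk hp
    rw [p.as_sum, map_sum]
    apply Finset.sum_eq_zero
    intro α hα
    have h1 := hp (MvPolynomial.mem_support_iff.1 hα)
    rw [← mul_one (MvPolynomial.coeff α p), ← smul_eq_mul, ← MvPolynomial.smul_monomial, map_smul, Me_monomial, if_neg, smul_zero]
    have h2 : α.degree = k := by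
      rw [← h1, Finsupp.degree_eq_weight_one]; rfl
    omega
  suffices h : (Me e).comp (LinearMap.mulRight ℂ a) = 0 by
    simpa using LinearMap.congr_fun h q
  apply lin_ext
  intro α
  simp only [LinearMap.comp_apply, LinearMap.mulRight_apply, LinearMap.zero_apply]
  exact key _ _ (by omega : e < α.degree + k) ((MvPolynomial.isHomogeneous_monomial _ rfl).mul ha)

section dcalc
variable (d : Fin n → Derivation ℂ (KK n) (KK n)) (hd : ExtendsPderiv d)
variable (g : OO n) (hg : g = ∑ i : Fin n, MvPolynomial.X i ^ 2)

lemma Dop_C (D : Derivation ℂ (KK n) (KK n)) (f : OO n) (a : KK n) :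
    Dop D f (C a) = C (D a) + X * C (D (toK f) / toK f * a) := by
  simp only [Dop, LinearMap.add_apply, mulOp, LinearMap.mulLeft_apply, Derivation.coeFn_coe, coeffDer_C]
  rw [mul_assoc, ← C_mul]

lemma pderiv_g (hg : g = ∑ i : Fin n, MvPolynomial.X i ^ 2) (k : Fin n) :
    MvPolynomial.pderiv k g = 2 * MvPolynomial.X k := by
  classical
  rw [hg, map_sum, Finset.sum_eq_single k]
  · simp [Derivation.leibniz_pow]
  · intro b _ hb
    simp [Derivation.leibniz_pow, MvPolynomial.pderiv_X_of_ne hb]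
  · simp

lemma d_g {d : Fin n → Derivation ℂ (KK n) (KK n)} (hd : ExtendsPderiv d)
    (hg : g = ∑ i : Fin n, MvPolynomial.X i ^ 2) (k : Fin n) :
    d k (toK g) = 2 * toK (MvPolynomial.X k) := by
  rw [hd, pderiv_g g hg, toK_mul]; congr 1
  exact map_ofNat _ 2

lemma g_ne (hg : g = ∑ i : Fin n, MvPolynomial.X i ^ 2) (hn : 0 < n) : g ≠ 0 := by
  classical
  intro h
  have := congrArg (MvPolynomial.eval (Pi.single (⟨0, hn⟩ : Fin n) (1:ℂ))) (hg.symm.trans h)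
  rw [map_sum, Finset.sum_eq_single ⟨0, hn⟩] at this
  · simp at this
  · intro b _ hb; simp [hb]
  · simp

lemma der_quot {F : Type*} [Field F] [Algebra ℂ F] (D : Derivation ℂ F F) (a G : F) (hG : G ≠ 0) (m : ℕ) :
    D (a * (G^m)⁻¹) = D a * (G^m)⁻¹ - m * a * D G * G⁻¹ * (G^m)⁻¹ := by
  rw [Derivation.leibniz, Derivation.leibniz_inv, Derivation.leibniz_pow]
  cases m with
  | zero => simp
  | succ m =>
    simp only [smul_eq_mul, nsmul_eq_mul, Nat.add_sub_cancel]
    field_simp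
    ring

end dcalc

lemma ident1 (n ℓ : ℕ) (hn : 0 < n) 
    (d : Fin n → Derivation ℂ (KK n) (KK n)) (hd : ExtendsPderiv d)
    (g : OO n) (hg : g = ∑ i : Fin n, MvPolynomial.X i ^ 2)
    (f : OO n) (hf : f = MvPolynomial.X (⟨0, hn⟩ : Fin n))
    (delta : KK n) (hdelta : delta = (toK (g ^ ℓ))⁻¹) :
    ((Polynomial.X + Polynomial.C (toK (MvPolynomial.C ((n : ℂ) - 2 * (ℓ : ℂ)))))
        * Polynomial.C delta
      = ∑ i : Fin n,
          (Dop (d i) f) ((mulOp (Polynomial.C (toK (MvPolynomial.X i))))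
            (Polynomial.C delta))) := by
  have hG := toK_ne (g_ne g hg hn)
  have h0 : toK f ≠ 0 := by rw [hf]; exact toK_ne (MvPolynomial.X_ne_zero _)
  simp only [mulOp, LinearMap.mulLeft_apply, ← C_mul, Dop_C, Finset.sum_add_distrib]
  rw [add_mul, add_comm, ← map_sum, ← Finset.mul_sum, ← map_sum, ← C_mul]
  congr 2
  · have (i : Fin n) : d i (toK (MvPolynomial.X i) * delta) = delta - 2 * (ℓ : KK n) * (toK g)⁻¹ * delta * toK (MvPolynomial.X i ^ 2) := by
      rw [hdelta, toK_pow, der_quot _ _ _ hG, d_g g hd hg, hd, MvPolynomial.pderiv_X_self, toK_one, toK_pow]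
      ring
    simp only [this, Finset.sum_sub_distrib, ← Finset.mul_sum]
    rw [← toK_sum, ← hg, toK_C]
    simp only [map_sub, map_mul, map_natCast, map_ofNat, Finset.sum_const, Finset.card_univ, Fintype.card_fin, nsmul_eq_mul]
    field_simp
  · congr 1
    rw [Finset.sum_eq_single ⟨0, hn⟩]
    · rw [hd, hf, MvPolynomial.pderiv_X_self, toK_one]
      rw [hf] at h0
      field_simp
    · intro b _ hb
      rw [hd, hf, MvPolynomial.pderiv_X_of_ne (Ne.symm hb), toK_zero]; simp
    · simp

lemma Dop_ne (n : ℕ) (z : Fin n)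
    (d : Fin n → Derivation ℂ (KK n) (KK n)) (hd : ExtendsPderiv d) (k : Fin n) (hk : k ≠ z) (a : KK n) :
    Dop (d k) (MvPolynomial.X z) (C a) = C (d k a) := by
  rw [Dop_C, hd, MvPolynomial.pderiv_X_of_ne (Ne.symm hk), toK_zero]; simp

lemma d_gpow (ℓ j : ℕ) (hn : 0 < n) 
    {d : Fin n → Derivation ℂ (KK n) (KK n)} (hd : ExtendsPderiv d)
    (g : OO n) (hg : g = ∑ i : Fin n, MvPolynomial.X i ^ 2) (k : Fin n) :
    d k (toK g ^ (j+1) * (toK (g ^ ℓ))⁻¹) = 2 * ((j + 1 : KK n) - (ℓ : KK n)) * toK (MvPolynomial.X k) * toK g ^ j * (toK (g ^ ℓ))⁻¹ := by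
  have hG := toK_ne (g_ne g hg hn)
  rw [toK_pow, der_quot _ _ _ hG, Derivation.leibniz_pow, d_g g hd hg]
  simp only [smul_eq_mul, nsmul_eq_mul, Nat.add_sub_cancel]
  push_cast
  field_simp
  ring

lemma ident2 (n ℓ : ℕ) (hn : 0 < n) 
    (d : Fin n → Derivation ℂ (KK n) (KK n)) (hd : ExtendsPderiv d)
    (g : OO n) (hg : g = ∑ i : Fin n, MvPolynomial.X i ^ 2)
    (f : OO n) (hf : f = MvPolynomial.X (⟨0, hn⟩ : Fin n))
    (delta : KK n) (hdelta : delta = (toK (g ^ ℓ))⁻¹) :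
    (∀ (i : Fin n), i ≠ ⟨0, hn⟩ → ∀ j : ℕ, 1 ≤ j →
      (Dop (d i) f)
          (Polynomial.C (toK (MvPolynomial.C (2 * ((j : ℂ) - (ℓ : ℂ)))
              * (g ^ (j - 1) * MvPolynomial.X (⟨0, hn⟩ : Fin n) ^ 2)) * delta)
            + ∑ k ∈ Finset.univ.erase (⟨0, hn⟩ : Fin n),
                (Dop (d k) f) (Polynomial.C (toK (MvPolynomial.X k * g ^ j) * delta)))
        = Polynomial.C (toK (MvPolynomial.C
              (2 * ((j : ℂ) - (ℓ : ℂ)) * ((n : ℂ) + 2 * ((j : ℂ) - (ℓ : ℂ)) - 1))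
              * (MvPolynomial.X i * g ^ (j - 1))) * delta)) := by
  intro i hi j hj
  obtain ⟨j, rfl⟩ : ∃ j', j = j' + 1 := ⟨j - 1, by omega⟩
  have hG := toK_ne (g_ne g hg hn)
  have e1 : ∀ k ∈ Finset.univ.erase (⟨0, hn⟩ : Fin n),
      (Dop (d k) f) (Polynomial.C (toK (MvPolynomial.X k * g ^ (j+1)) * delta))
       = C (toK g ^ (j+1) * delta + 2 * ((j + 1 : KK n) - (ℓ : KK n)) * toK g ^ j * delta * toK (MvPolynomial.X k ^ 2)) := by
    intro k hk
    rw [hf, Dop_ne n _ d hd k (by simpa using hk), toK_mul, mul_assoc, Derivation.leibniz, toK_pow, hdelta, d_gpow ℓ j hn hd g hg,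
      hd, MvPolynomial.pderiv_X_self, toK_one, toK_pow, toK_pow]
    simp only [smul_eq_mul]
    congr 1
    ring
  have e2 : ∑ k ∈ Finset.univ.erase (⟨0, hn⟩ : Fin n), toK (MvPolynomial.X k ^ 2 : OO n) = toK g - toK (MvPolynomial.X ⟨0, hn⟩) ^ 2 := by
    rw [← toK_sum, ← toK_pow, ← toK_sub]
    congr 1
    rw [hg, ← Finset.add_sum_erase _ _ (Finset.mem_univ (⟨0, hn⟩ : Fin n))]
    ring
  rw [Finset.sum_congr rfl e1, ← map_sum, Finset.sum_add_distrib, ← Finset.mul_sum (a := (2 * ((j + 1 : KK n) - (ℓ : KK n)) * toK g ^ j * delta)), e2, ← C_add]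
  simp only [Finset.sum_const, Finset.card_erase_of_mem (Finset.mem_univ _), Finset.card_univ, Fintype.card_fin, nsmul_eq_mul, Nat.cast_sub (Nat.succ_le_of_lt hn), Nat.add_sub_cancel]
  have e3 : toK (MvPolynomial.C (2 * (((j + 1 : ℕ) : ℂ) - (ℓ : ℂ)))
              * (g ^ j * MvPolynomial.X (⟨0, hn⟩ : Fin n) ^ 2)) * delta + (((n : KK n) - ((Nat.succ 0 : ℕ) : KK n)) * (toK g ^ (j+1) * delta) +
      2 * ((j + 1 : KK n) - (ℓ : KK n)) * toK g ^ j * delta * (toK g - toK (MvPolynomial.X ⟨0, hn⟩) ^ 2))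
     = ((n : ℂ) + 2 * (((j + 1 : ℕ) : ℂ) - (ℓ : ℂ)) - 1) • (toK g ^ (j+1) * delta) := by
    rw [Algebra.smul_def]
    simp only [toK_mul, toK_pow, toK_C]
    simp only [map_mul, map_sub, map_add, map_natCast, map_ofNat, map_one]
    push_cast
    ring
  rw [e3, hf, Dop_ne n _ d hd i hi, Derivation.map_smul, hdelta, d_gpow ℓ j hn hd g hg, Algebra.smul_def]
  congr 1
  simp only [toK_mul, toK_pow, toK_C]
  simp only [map_mul, map_sub, map_add, map_natCast, map_ofNat, map_one]
  push_cast
  ring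

/-- The ideal-like kernel of the residue functional. -/
def ZZ (n : ℕ) (hn : 0 < n) : Submodule ℂ (KK n) where
  carrier := {v | ∃ m e : ℕ, e + n = 2 * m ∧ ∃ p : OO n,
    v * toK (∑ i : Fin n, MvPolynomial.X i ^ 2) ^ m = toK p ∧ Me e p = 0}
  zero_mem' := ⟨n, n, by ring, 0, by simp [toK_zero], by simp⟩
  add_mem' := by
    rintro u v ⟨m, e, he, p, hp, hp0⟩ ⟨m', e', he', p', hp', hp0'⟩
    obtain ⟨c, -, hc⟩ := Me_gpow (n := n) e hn m'
    obtain ⟨c', -, hc'⟩ := Me_gpow (n := n) e' hn m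
    refine ⟨m + m', e + 2 * m', by omega, 
      (∑ i : Fin n, MvPolynomial.X i ^ 2) ^ m' * p + (∑ i : Fin n, MvPolynomial.X i ^ 2) ^ m * p', ?_, ?_⟩
    · rw [toK_add, toK_mul, toK_mul, ← hp, ← hp', toK_pow, toK_pow]; ring
    · rw [map_add, hc, hp0, show e + 2 * m' = e' + 2 * m by omega, hc', hp0']; simp
  smul_mem' := by
    rintro c v ⟨m, e, he, p, hp, hp0⟩
    exact ⟨m, e, he, c • p, by rw [toK_smul, ← hp, smul_mul_assoc], by rw [map_smul, hp0, smul_zero]⟩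

lemma ZZ_unique {n : ℕ} (hn : 0 < n) {v : KK n} (hv : v ∈ ZZ n hn) (m e : ℕ) (he : e + n = 2 * m) (p : OO n)
    (hp : v * toK (∑ i : Fin n, MvPolynomial.X i ^ 2) ^ m = toK p) : Me e p = 0 := by
  obtain ⟨m', e', he', p', hp', hp0'⟩ := hv
  obtain ⟨c, hc0, hc⟩ := Me_gpow (n := n) e hn m'
  obtain ⟨c', -, hc'⟩ := Me_gpow (n := n) e' hn m
  have : (∑ i : Fin n, MvPolynomial.X i ^ 2) ^ m' * p = (∑ i : Fin n, MvPolynomial.X i ^ 2) ^ m * p' := by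
    apply toK_inj
    rw [toK_mul, toK_mul, ← hp, ← hp', toK_pow, toK_pow]; ring
  have h2 := hc p
  rw [this, show e + 2 * m' = e' + 2 * m by omega, hc', hp0', mul_zero] at h2
  exact (mul_eq_zero.1 h2.symm).resolve_left hc0

lemma ZZ_der {n : ℕ} (hn : 0 < n) {d : Fin n → Derivation ℂ (KK n) (KK n)} (hd : ExtendsPderiv d)
    (j : Fin n) {v : KK n} (hv : v ∈ ZZ n hn) : d j v ∈ ZZ n hn := by
  obtain ⟨m, e, he, p, hp, -⟩ := hv
  set g : OO n := ∑ i : Fin n, MvPolynomial.X i ^ 2 with hg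
  have hG := toK_ne (g_ne g hg hn)
  have hv : v = toK p * (toK g ^ m)⁻¹ := by rw [← hp]; field_simp
  refine ⟨m + 1, e + 2, by omega, g * MvPolynomial.pderiv j p - (2 * m : ℂ) • (MvPolynomial.X j * p), ?_, ?_⟩
  · rw [hv, der_quot _ _ _ hG, d_g g hd hg, hd, ← hg, toK_sub, toK_mul, toK_smul, toK_mul, Algebra.smul_def]
    simp only [map_mul, map_natCast, map_ofNat]
    field_simp
    ring
  · rw [map_sub, map_smul, Me_g, Me_stein, smul_eq_mul, sub_eq_zero]
    congr 1
    exact_mod_cast (by omega : n + e = 2 * m)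

/-- Largest `𝒟`-submodule in the kernel of the residue functional. -/
def WW (n : ℕ) (hn : 0 < n) : Submodule ℂ (KK n) where
  carrier := {v | ∀ q : OO n, toK q * v ∈ ZZ n hn}
  zero_mem' := fun q => by rw [mul_zero]; exact Submodule.zero_mem _
  add_mem' := fun ha hb q => by rw [mul_add]; exact Submodule.add_mem _ (ha q) (hb q)
  smul_mem' := fun c v hv q => by rw [mul_smul_comm]; exact Submodule.smul_mem _ _ (hv q)

lemma WW_mul {n : ℕ} (hn : 0 < n) (r : OO n) {v : KK n} (hv : v ∈ WW n hn) : toK r * v ∈ WW n hn := by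
  intro q
  rw [← mul_assoc, ← toK_mul]; exact hv _

lemma WW_der {n : ℕ} (hn : 0 < n) {d : Fin n → Derivation ℂ (KK n) (KK n)} (hd : ExtendsPderiv d)
    (j : Fin n) {v : KK n} (hv : v ∈ WW n hn) : d j v ∈ WW n hn := by
  intro q
  have : toK q * d j v = d j (toK q * v) - toK (MvPolynomial.pderiv j q) * v := by
    rw [Derivation.leibniz, hd, smul_eq_mul, smul_eq_mul]; ring
  rw [this]
  exact Submodule.sub_mem _ (ZZ_der hn hd j (hv q)) (hv _)

lemma homog_g (n : ℕ) : (∑ i : Fin n, MvPolynomial.X i ^ 2 : OO n).IsHomogeneous 2 := by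
  apply MvPolynomial.IsHomogeneous.sum
  intro i _
  simpa using (MvPolynomial.isHomogeneous_X ℂ i).pow 2

lemma WW_poly {n : ℕ} (hn : 0 < n) (r : OO n) : toK r ∈ WW n hn := by
  intro q
  rw [← toK_mul]
  refine ⟨n, n, by ring, _, by rw [← toK_pow, ← toK_mul], ?_⟩
  exact Me_high _ _ _ _ ((homog_g n).pow n) (by omega)

/-- Specialisation `s = r`. -/
def spec (n r : ℕ) (z : Fin n) : Polynomial (KK n) →ₗ[ℂ] KK n where
  toFun u := u.eval (r : KK n) * toK (MvPolynomial.X z) ^ r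
  map_add' a b := by rw [eval_add, add_mul]
  map_smul' c a := by simp [eval_smul]

lemma eval_coeffDer (D : Derivation ℂ (KK n) (KK n)) (r : ℕ) (u : Polynomial (KK n)) :
    (coeffDer D u).eval (r : KK n) = D (u.eval (r : KK n)) := by
  induction u using Polynomial.induction_on' with
  | add p q hp hq => simp [hp, hq]
  | monomial k a =>
    rw [← C_mul_X_pow_eq_monomial, Derivation.leibniz, Derivation.leibniz_pow, coeffDer_X, coeffDer_C]
    simp only [eval_add, eval_mul, eval_C, eval_pow, eval_X, smul_eq_mul, nsmul_eq_mul, mul_zero, zero_add, add_zero, eval_zero, Derivation.leibniz, Derivation.leibniz_pow, Derivation.map_natCast]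

lemma spec_Dop (r : ℕ) (z : Fin n) (D : Derivation ℂ (KK n) (KK n)) (u : Polynomial (KK n)) :
    spec n r z (Dop D (MvPolynomial.X z) u) = D (spec n r z u) := by
  have h0 : toK (MvPolynomial.X z : OO n) ≠ 0 := toK_ne (MvPolynomial.X_ne_zero _)
  simp only [spec, LinearMap.coe_mk, AddHom.coe_mk, Dop, LinearMap.add_apply, mulOp, LinearMap.mulLeft_apply, Derivation.coeFn_coe, eval_add, eval_mul, eval_X, eval_C, eval_coeffDer, Derivation.leibniz, Derivation.leibniz_pow, smul_eq_mul, nsmul_eq_mul]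
  cases r with
  | zero => simp
  | succ r =>
    simp only [Nat.add_sub_cancel]
    field_simp
    ring

lemma spec_DSpan (hn : 0 < n) (r : ℕ) (z : Fin n) {d : Fin n → Derivation ℂ (KK n) (KK n)} (hd : ExtendsPderiv d)
    (T : Set (Polynomial (KK n))) (hT : ∀ t ∈ T, spec n r z t ∈ WW n hn) (y : Polynomial (KK n))
    (hy : y ∈ DSpan d (MvPolynomial.X z) T) : spec n r z y ∈ WW n hn := by
  suffices h : DSpan d (MvPolynomial.X z) T ≤ (WW n hn).comap (spec n r z) from h hy
  apply Submodule.span_le.2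
  rintro _ ⟨P, hP, t, ht, rfl⟩
  have key : ∀ u, spec n r z u ∈ WW n hn → spec n r z (P u) ∈ WW n hn := by
    induction hP using Algebra.adjoin_induction with
    | mem P hP =>
      intro u hu
      rcases hP with (⟨q, rfl⟩ | rfl) | ⟨i, rfl⟩
      · have := WW_mul hn q hu
        simpa [spec, mulOp, mul_assoc] using this
      · have := WW_mul hn (MvPolynomial.C (r:ℂ)) hu
        rw [toK_C] at this
        simpa [spec, mulOp, mul_assoc] using this
      · change spec n r z (Dop (d i) _ u) ∈ _
        rw [spec_Dop]
        exact WW_der hn hd i hu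
    | algebraMap c =>
      intro u hu
      rw [Module.algebraMap_end_apply, map_smul]
      exact Submodule.smul_mem _ _ hu
    | add P Q _ _ hP hQ =>
      intro u hu
      rw [LinearMap.add_apply, map_add]
      exact Submodule.add_mem _ (hP u hu) (hQ u hu)
    | mul P Q _ _ hP hQ =>
      intro u hu
      exact hP _ (hQ _ hu)
  exact key t (hT t ht)

lemma DSpan_stable {d : Fin n → Derivation ℂ (KK n) (KK n)} {f : OO n}
    {T : Set (Polynomial (KK n))} {P} (hP : P ∈ WeylS d f) {y} (hy : y ∈ DSpan d f T) : P y ∈ DSpan d f T := by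
  suffices h : DSpan d f T ≤ (DSpan d f T).comap P from h hy
  apply Submodule.span_le.2
  rintro _ ⟨Q, hQ, t, ht, rfl⟩
  exact Submodule.subset_span ⟨P * Q, mul_mem hP hQ, t, ht, rfl⟩

lemma DSpan_mem {d : Fin n → Derivation ℂ (KK n) (KK n)} {f : OO n}
    {T : Set (Polynomial (KK n))} {y} (hy : y ∈ T) : y ∈ DSpan d f T :=
  Submodule.subset_span ⟨1, one_mem _, y, hy, rfl⟩

lemma DSpan_mul {d : Fin n → Derivation ℂ (KK n) (KK n)} {f : OO n}
    {T : Set (Polynomial (KK n))} (q : OO n) {a} (hy : C a ∈ DSpan d f T) : C (toK q * a) ∈ DSpan d f T := by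
  have h : mulOp (C (toK q)) ∈ WeylS d f := Algebra.subset_adjoin (Or.inl (Or.inl ⟨q, rfl⟩))
  simpa [mulOp] using DSpan_stable h hy

lemma DSpan_D {d : Fin n → Derivation ℂ (KK n) (KK n)} {f : OO n}
    {T : Set (Polynomial (KK n))} (i : Fin n) {y} (hy : y ∈ DSpan d f T) : Dop (d i) f y ∈ DSpan d f T :=
  DSpan_stable (Algebra.subset_adjoin (Or.inr ⟨i, rfl⟩)) hy

lemma minor_eq (ℓ : ℕ) (g : OO n) (hg : g = ∑ i : Fin n, MvPolynomial.X i ^ 2) (f : OO n) (cols : Fin 2 → Fin n) :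
    minorHF (fun _ : Fin 1 => g ^ ℓ) f cols =
      MvPolynomial.C (2 * ℓ : ℂ) * g ^ (ℓ - 1) * (MvPolynomial.X (cols 0) * MvPolynomial.pderiv (cols 1) f 
        - MvPolynomial.X (cols 1) * MvPolynomial.pderiv (cols 0) f) := by
  have (k : Fin n) : MvPolynomial.pderiv k (g ^ ℓ) = MvPolynomial.C (2 * ℓ : ℂ) * g ^ (ℓ - 1) * MvPolynomial.X k := by
    rw [Derivation.leibniz_pow, pderiv_g g hg]
    simp only [smul_eq_mul, nsmul_eq_mul, map_mul, map_natCast, map_ofNat]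
    ring
  rw [minorHF, Matrix.det_fin_two]
  have l1 : (1 : Fin 2) = Fin.last 1 := rfl
  have l0 : (0 : Fin 2) = Fin.castSucc 0 := rfl
  simp only [Matrix.of_apply]
  have a1 (a : OO n) (b : Fin 1 → OO n) : (Fin.lastCases a b (1 : Fin 2) : OO n) = a := Fin.lastCases_last (motive := fun _ => OO n) ..
  have a0 (a : OO n) (b : Fin 1 → OO n) : (Fin.lastCases a b (0 : Fin 2) : OO n) = b 0 := Fin.lastCases_castSucc (motive := fun _ => OO n) (i := (0 : Fin 1)) ..
  rw [a1, a1, a0, a0, this, this]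
  ring

lemma memb (n ℓ : ℕ) (hn : 0 < n) (hneven : Even n) (hℓ : 1 ≤ ℓ)
    (d : Fin n → Derivation ℂ (KK n) (KK n)) (hd : ExtendsPderiv d)
    (g : OO n) (hg : g = ∑ i : Fin n, MvPolynomial.X i ^ 2)
    (f : OO n) (hf : f = MvPolynomial.X (⟨0, hn⟩ : Fin n))
    (delta : KK n) (hdelta : delta = (toK (g ^ ℓ))⁻¹)
    (T : Set (Polynomial (KK n)))
    (hT : T = ({y | ∃ cols : Fin 2 → Fin n, StrictMono cols ∧
            y = Polynomial.C (toK (minorHF (fun _ : Fin 1 => g ^ ℓ) f cols) * delta)} ∪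
          {Polynomial.C (toK f * delta)}))
    (i : Fin n) : C (toK (MvPolynomial.X i) * delta) ∈ DSpan d f T := by
  have h0 : C (toK f * delta) ∈ DSpan d f T := DSpan_mem (by rw [hT]; right; rfl)
  by_cases hi0 : i = ⟨0, hn⟩
  · rw [hi0, ← hf]; exact h0
  have scale : ∀ (c : ℂ) (q : OO n), c ≠ 0 → C (toK (MvPolynomial.C c * q) * delta) ∈ DSpan d f T →
      C (toK q * delta) ∈ DSpan d f T := by
    intro c q hc h
    have := DSpan_mul (MvPolynomial.C c⁻¹) h
    rw [← mul_assoc, ← toK_mul, ← mul_assoc, ← MvPolynomial.C_mul, inv_mul_cancel₀ hc, MvPolynomial.C_1, one_mul] at this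
    exact this
  have main : ∀ t j : ℕ, j + t + 1 = ℓ → ∀ i : Fin n, i ≠ ⟨0, hn⟩ →
      C (toK (MvPolynomial.X i * g ^ j) * delta) ∈ DSpan d f T := by
    intro t
    induction t with
    | zero =>
      intro j hj i hi
      apply scale (-(2 * ℓ : ℂ))
      · simp; omega
      apply DSpan_mem
      rw [hT]; left
      refine ⟨![⟨0, hn⟩, i], ?_, ?_⟩
      · intro a b hab
        have : 0 < (i : ℕ) := Nat.pos_of_ne_zero fun h => hi (Fin.ext h)
        fin_cases a <;> fin_cases b <;> simp at hab ⊢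
        exact this
      · rw [minor_eq ℓ g hg]
        simp only [Matrix.cons_val_zero, Matrix.cons_val_one]
        rw [hf, MvPolynomial.pderiv_X_self, MvPolynomial.pderiv_X_of_ne (Ne.symm hi), show ℓ - 1 = j by omega]
        congr 3
        rw [map_neg]; ring
    | succ t ih =>
      intro j hj i hi
      have id2 := ident2 n ℓ hn d hd g hg f hf delta hdelta i hi (j + 1) (by omega)
      rw [Nat.add_sub_cancel] at id2
      refine scale (2 * (((j + 1 : ℕ) : ℂ) - (ℓ : ℂ)) * ((n : ℂ) + 2 * (((j + 1 : ℕ) : ℂ) - (ℓ : ℂ)) - 1)) _ ?_ ?_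
      · obtain ⟨k, hk⟩ := hneven
        refine mul_ne_zero (mul_ne_zero two_ne_zero ?_) ?_
        · rw [sub_ne_zero]; norm_cast; omega
        · intro h
          have h' : ((n : ℤ) : ℂ) + 2 * (((j + 1 : ℕ) : ℤ) - (ℓ : ℤ)) - 1 = 0 := by exact_mod_cast h
          have : (n : ℤ) + 2 * (((j + 1 : ℕ) : ℤ) - (ℓ : ℤ)) - 1 = 0 := by exact_mod_cast h'
          omega
      · rw [← id2]
        apply DSpan_D
        apply Submodule.add_mem
        · have := DSpan_mul (MvPolynomial.C (2 * (((j + 1 : ℕ) : ℂ) - (ℓ : ℂ))) * (g ^ j * MvPolynomial.X (⟨0, hn⟩ : Fin n))) h0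
          rw [← mul_assoc, ← toK_mul] at this
          convert this using 4
          rw [hf]; ring
        · apply Submodule.sum_mem
          intro k hk
          apply DSpan_D
          exact ih (j + 1) (by omega) k (by simpa using hk)
  have := main (ℓ - 1) 0 (by omega) i hi0
  simpa using this

lemma spec_T (n ℓ r : ℕ) (hn : 0 < n) (hr : r + n = 2 * ℓ)
    (g : OO n) (hg : g = ∑ i : Fin n, MvPolynomial.X i ^ 2)
    (z i : Fin n) (delta : KK n) (hdelta : delta = (toK (g ^ ℓ))⁻¹) :
    toK (MvPolynomial.X i) * delta * toK (MvPolynomial.X z) ^ r ∈ WW n hn := by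
  intro q
  have hG := toK_ne (g_ne g hg hn)
  refine ⟨ℓ, r, hr, q * (MvPolynomial.X i * MvPolynomial.X z ^ r), ?_, ?_⟩
  · rw [← hg, hdelta]
    simp only [toK_mul, toK_pow]
    field_simp
  · refine Me_high r _ _ (1 + r) ((MvPolynomial.isHomogeneous_X ℂ i).mul ?_) (by omega)
    simpa using (MvPolynomial.isHomogeneous_X ℂ z).pow r

lemma X_not_dvd (n : ℕ) (hn : 0 < n) (hn2 : 2 ≤ n) :
    ¬ (MvPolynomial.X (⟨0, hn⟩ : Fin n) : OO n) ∣ ∑ i : Fin n, MvPolynomial.X i ^ 2 := by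
  classical
  intro h
  have h2 := map_dvd (MvPolynomial.eval (Pi.single (⟨1, hn2⟩ : Fin n) (1:ℂ))) h
  rw [map_sum, Finset.sum_eq_single ⟨1, hn2⟩] at h2
  · simp at h2
  · intro b _ hb; simp [hb]
  · simp

lemma locSub_rep (f : OO n) (hf : f ≠ 0) (v : KK n) (hv : v ∈ locSub {f}) :
    ∃ (k : ℕ) (a : OO n), v * toK f ^ k = toK a := by
  have h0 := toK_ne hf
  refine Submodule.span_induction ?_ ?_ ?_ ?_ hv
  · rintro _ ⟨r, _, rfl, k, rfl⟩
    refine ⟨k, r, ?_⟩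
    rw [mul_assoc, ← mul_pow, inv_mul_cancel₀ h0, one_pow, mul_one]
  · exact ⟨0, 0, by simp [toK_zero]⟩
  · rintro x y _ _ ⟨k, a, h⟩ ⟨k', a', h'⟩
    refine ⟨k + k', f ^ k' * a + f ^ k * a', ?_⟩
    rw [toK_add, toK_mul, toK_mul, ← h, ← h', toK_pow, toK_pow]; ring
  · rintro c x _ ⟨k, a, h⟩
    exact ⟨k, c • a, by rw [toK_smul, ← h, smul_mul_assoc]⟩

lemma loc_inter (n : ℕ) (hn : 0 < n) (hn2 : 2 ≤ n) (v : KK n) (k m : ℕ) (a b : OO n)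
    (h1 : v * toK (MvPolynomial.X (⟨0, hn⟩ : Fin n)) ^ k = toK a)
    (h2 : v * toK (∑ i : Fin n, MvPolynomial.X i ^ 2) ^ m = toK b) : ∃ r, v = toK r := by
  have hX : toK (MvPolynomial.X (⟨0, hn⟩ : Fin n) : OO n) ≠ 0 := toK_ne (MvPolynomial.X_ne_zero _)
  have e : a * (∑ i : Fin n, MvPolynomial.X i ^ 2) ^ m = MvPolynomial.X (⟨0, hn⟩ : Fin n) ^ k * b := by
    apply toK_inj
    rw [toK_mul, toK_mul, ← h1, ← h2, toK_pow, toK_pow]; ring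
  have hp : Prime (MvPolynomial.X (⟨0, hn⟩ : Fin n) : OO n) := MvPolynomial.X_prime
  obtain ⟨c, rfl⟩ := hp.pow_dvd_of_dvd_mul_right k (fun h => X_not_dvd n hn hn2 (hp.dvd_of_dvd_pow h)) (Dvd.intro _ e.symm)
  refine ⟨c, ?_⟩
  rw [toK_mul, mul_comm, toK_pow] at h1
  exact mul_left_cancel₀ (pow_ne_zero _ hX) h1

lemma minimal (n ℓ r : ℕ) (hn : 0 < n) (hneven : Even n) (hr : r + n = 2 * ℓ)
    (d : Fin n → Derivation ℂ (KK n) (KK n)) (hd : ExtendsPderiv d)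
    (g : OO n) (hg : g = ∑ i : Fin n, MvPolynomial.X i ^ 2)
    (f : OO n) (hf : f = MvPolynomial.X (⟨0, hn⟩ : Fin n))
    (delta : KK n) (hdelta : delta = (toK (g ^ ℓ))⁻¹)
    (c : Polynomial ℂ)
    (hc : bK c * Polynomial.C delta ∈ DSpan d f ({y | ∃ cols : Fin 2 → Fin n, StrictMono cols ∧
            y = Polynomial.C (toK (minorHF (fun _ : Fin 1 => g ^ ℓ) f cols) * delta)} ∪
          {Polynomial.C (toK f * delta)}) ⊔ polySub (locSub {f})) : c.eval (r : ℂ) = 0 := by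
  have hG := toK_ne (g_ne g hg hn)
  have hX : toK (MvPolynomial.X (⟨0, hn⟩ : Fin n) : OO n) ≠ 0 := toK_ne (MvPolynomial.X_ne_zero _)
  have hn2 : 2 ≤ n := by obtain ⟨k, hk⟩ := hneven; omega
  obtain ⟨y, hy, w, hw, hyw⟩ := Submodule.mem_sup.1 hc
  have hspec (a : KK n) : spec n r ⟨0, hn⟩ (C a) = a * toK (MvPolynomial.X (⟨0, hn⟩ : Fin n)) ^ r := by
    simp [spec]
  have hyW : spec n r ⟨0, hn⟩ y ∈ WW n hn := by
    rw [hf] at hy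
    refine spec_DSpan hn r ⟨0, hn⟩ hd _ ?_ y hy
    have hb := fun i => spec_T n ℓ r hn hr g hg ⟨0, hn⟩ i delta hdelta
    rintro t (⟨cols, -, rfl⟩ | rfl)
    · rw [hspec, minor_eq ℓ g hg]
      have := WW_mul hn (MvPolynomial.C (2 * ℓ : ℂ) * g ^ (ℓ - 1)) (Submodule.sub_mem _
        (WW_mul hn (MvPolynomial.pderiv (cols 1) (MvPolynomial.X ⟨0, hn⟩)) (hb (cols 0)))
        (WW_mul hn (MvPolynomial.pderiv (cols 0) (MvPolynomial.X ⟨0, hn⟩)) (hb (cols 1))))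
      convert this using 1
      simp only [toK_mul, toK_sub]
      ring
    · rw [hspec]
      exact hb _
  -- the part from `V`
  have hwV : spec n r ⟨0, hn⟩ w ∈ locSub {f} := by
    have hmul : ∀ q : OO n, ∀ v ∈ locSub {f}, v * toK q ∈ locSub {f} := by
      intro q v hv
      refine Submodule.span_induction ?_ ?_ ?_ ?_ hv
      · rintro _ ⟨r, _, rfl, k, rfl⟩
        exact Submodule.subset_span ⟨r * q, _, rfl, k, by rw [toK_mul]; ring⟩
      · rw [zero_mul]; exact Submodule.zero_mem _
      · intro x y _ _ hx hy; rw [add_mul]; exact Submodule.add_mem _ hx hy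
      · intro c x _ hx; rw [smul_mul_assoc]; exact Submodule.smul_mem _ _ hx
    change w.eval (r : KK n) * toK (MvPolynomial.X (⟨0, hn⟩ : Fin n)) ^ r ∈ _
    rw [← toK_pow]
    apply hmul
    rw [eval_eq_sum_range]
    apply Submodule.sum_mem
    intro k _
    have := hmul (MvPolynomial.C ((r : ℂ) ^ k)) _ (hw k)
    rw [toK_C, map_pow, map_natCast] at this
    exact this
  obtain ⟨k, a, hka⟩ := locSub_rep f (by rw [hf]; exact MvPolynomial.X_ne_zero _) _ hwV
  obtain ⟨m, e, he, p, hp, -⟩ := hyW 1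
  rw [toK_one, one_mul] at hp
  have hsum : spec n r ⟨0, hn⟩ y + spec n r ⟨0, hn⟩ w
      = toK (MvPolynomial.C (c.eval (r : ℂ))) * delta * toK (MvPolynomial.X (⟨0, hn⟩ : Fin n)) ^ r := by
    rw [← map_add, hyw]
    simp only [spec, LinearMap.coe_mk, AddHom.coe_mk, eval_mul, eval_C]
    congr 2
    rw [bK, ← map_natCast ((algebraMap (OO n) (KK n)).comp MvPolynomial.C) r, eval_map, eval₂_at_apply]
    rfl
  obtain ⟨q, hq⟩ : ∃ q, spec n r ⟨0, hn⟩ w = toK q := by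
    refine loc_inter n hn hn2 _ k (ℓ + m) a 
      (MvPolynomial.C (c.eval (r : ℂ)) * MvPolynomial.X (⟨0, hn⟩ : Fin n) ^ r * g ^ m - g ^ ℓ * p) (by rw [← hf]; exact hka) ?_
    rw [eq_sub_of_add_eq' hsum, hdelta]
    simp only [toK_sub, toK_mul, toK_pow, ← hp, ← hg]
    field_simp
    ring
  have hfin : toK (MvPolynomial.C (c.eval (r : ℂ))) * delta * toK (MvPolynomial.X (⟨0, hn⟩ : Fin n)) ^ r ∈ ZZ n hn := by
    rw [← hsum, hq]
    have := Submodule.add_mem _ hyW (WW_poly hn q) 1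
    rwa [toK_one, one_mul] at this
  have h0 := ZZ_unique hn hfin ℓ r hr (c.eval (r : ℂ) • MvPolynomial.monomial (Finsupp.single ⟨0, hn⟩ r) 1) (by
    rw [toK_smul, Algebra.smul_def, ← toK_C, ← MvPolynomial.X_pow_eq_monomial, hdelta, ← hg]
    simp only [toK_pow]
    field_simp)
  rw [map_smul, Me_monomial, if_pos (Finsupp.degree_single _ _), Finset.prod_eq_single ⟨0, hn⟩ (by
    intro b _ hb; simp [Finsupp.single_eq_of_ne hb, mu]) (by simp), Finsupp.single_eq_same] at h0
  refine (mul_eq_zero.1 h0).resolve_right ?_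
  obtain ⟨k, hk⟩ := hneven
  rw [show r = 2 * (ℓ - k) by omega]
  exact mu_even _

/-- for `n` even, `g = x₁²+⋯+xₙ²`, `h = g^ℓ` (`ℓ ≥ 1`), `f = x₁`:
the identities `(s+n−2ℓ) δ_h x₁^s = (Σᵢ ∂ᵢ·xᵢ)·δ_h x₁^s` and, for `2 ≤ i ≤ n`, `j ≥ 1`,
`∂ᵢ[2(j−ℓ)g^(j−1)x₁² + Σ_{k≥2} ∂_k·x_k g^j]·δ_h x₁^s = 2(j−ℓ)(n+2(j−ℓ)−1)xᵢg^(j−1)δ_h x₁^s`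
hold; consequently for `ℓ ≥ n/2`, `b'_{x₁}(h,s) = s + n − 2ℓ`. -/
theorem quadric_power_computation (n ℓ : ℕ) (hn : 1 ≤ n) (hneven : Even n) (hℓ : 1 ≤ ℓ)
    (d : Fin n → Derivation ℂ (KK n) (KK n)) (hd : ExtendsPderiv d)
    (g : OO n) (hg : g = ∑ i : Fin n, MvPolynomial.X i ^ 2)
    (h : Fin 1 → OO n) (hh : h = fun _ => g ^ ℓ)
    (f : OO n) (hf : f = MvPolynomial.X (⟨0, by omega⟩ : Fin n))
    (delta : KK n) (hdelta : delta = (toK (g ^ ℓ))⁻¹)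
    (V : Submodule ℂ (KK n)) (hV : V = locSub {f})
    (memB' : Polynomial ℂ → Prop)
    (hmemB' : ∀ b : Polynomial ℂ, memB' b ↔
      bK b * Polynomial.C delta ∈
        DSpan d f ({y | ∃ cols : Fin 2 → Fin n, StrictMono cols ∧
            y = Polynomial.C (toK (minorHF h f cols) * delta)} ∪
          {Polynomial.C (toK f * delta)}) ⊔ polySub V) :
    -- first identity: `(s + n − 2ℓ) δ_h x₁^s = (Σᵢ ∂ᵢ·xᵢ)·δ_h x₁^s`
    ((Polynomial.X + Polynomial.C (toK (MvPolynomial.C ((n : ℂ) - 2 * (ℓ : ℂ)))))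
        * Polynomial.C delta
      = ∑ i : Fin n,
          (Dop (d i) f) ((mulOp (Polynomial.C (toK (MvPolynomial.X i))))
            (Polynomial.C delta))) ∧
    -- second identity, for `i ≠ 1` (0-based: `i ≠ 0`) and `j ≥ 1`
    (∀ (i : Fin n), i ≠ ⟨0, by omega⟩ → ∀ j : ℕ, 1 ≤ j →
      (Dop (d i) f)
          (Polynomial.C (toK (MvPolynomial.C (2 * ((j : ℂ) - (ℓ : ℂ)))
              * (g ^ (j - 1) * MvPolynomial.X (⟨0, by omega⟩ : Fin n) ^ 2)) * delta)
            + ∑ k ∈ Finset.univ.erase (⟨0, by omega⟩ : Fin n),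
                (Dop (d k) f) (Polynomial.C (toK (MvPolynomial.X k * g ^ j) * delta)))
        = Polynomial.C (toK (MvPolynomial.C
              (2 * ((j : ℂ) - (ℓ : ℂ)) * ((n : ℂ) + 2 * ((j : ℂ) - (ℓ : ℂ)) - 1))
              * (MvPolynomial.X i * g ^ (j - 1))) * delta)) ∧
    -- consequently, for `ℓ ≥ n/2`, `b'_{x₁}(h,s) = s + n − 2ℓ`
    (n ≤ 2 * ℓ →
      (Polynomial.X + Polynomial.C ((n : ℂ) - 2 * (ℓ : ℂ))).Monic ∧
      memB' (Polynomial.X + Polynomial.C ((n : ℂ) - 2 * (ℓ : ℂ))) ∧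
      ∀ c : Polynomial ℂ, memB' c →
        (Polynomial.X + Polynomial.C ((n : ℂ) - 2 * (ℓ : ℂ))) ∣ c) := by
  have hn' : 0 < n := hn
  subst hh
  have I1 := ident1 n ℓ hn' d hd g hg f hf delta hdelta
  refine ⟨I1, ident2 n ℓ hn' d hd g hg f hf delta hdelta, fun hle => ⟨monic_X_add_C _, ?_, ?_⟩⟩
  · rw [hmemB']
    apply Submodule.mem_sup_left
    have e : (bK (X + C ((n : ℂ) - 2 * (ℓ : ℂ))) : Polynomial (KK n))
        = X + C (toK (MvPolynomial.C ((n : ℂ) - 2 * (ℓ : ℂ)))) := by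
      rw [bK, Polynomial.map_add, Polynomial.map_X, Polynomial.map_C]; rfl
    rw [e, I1]
    apply Submodule.sum_mem
    intro i _
    apply DSpan_D
    have := memb n ℓ hn' hneven hℓ d hd g hg f hf delta hdelta _ rfl i
    simpa [mulOp] using this
  · intro c hc
    rw [hmemB', hV] at hc
    have := minimal n ℓ (2 * ℓ - n) hn' hneven (by omega) d hd g hg f hf delta hdelta c hc
    have h2 := dvd_iff_isRoot.2 this
    rw [Nat.cast_sub hle] at h2
    convert h2 using 1
    rw [sub_eq_add_neg X, ← C_neg]
    push_cast
    rw [neg_sub]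
end
end
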